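/- arXiv:1707.02314 — 2 statements merged into one kernel-verified Lean document; each statement's English description precedes it below -/
import Mathlib

section
/- Let a ∈ ℝ, let I_f be an interval with least element a, nonempty interior, and I_f ⊂ [a,∞), let Ω = ℝ^m, let α = (α₁,…,α_m) ∈ (0,1]^m, let q_a ∈ ℝ^m, and let f : ℝ^m × I_f → ℝ^m be a Carathéodory function that is bounded on compacts and globally Lipschitz continuous in its first variable: for every compact subinterval [c,d] ⊂ I_f there exists L ≥ 0 with |f(x₂,t) − f(x₁,t)| ≤ L|x₂ − x₁| for all x₁, x₂ ∈ ℝ^m and almost every t ∈ [c,d]. Then the maximal solution (q,I) of the Caputo Cauchy problem ( _cD^{α_i}_{a+}[q_i] = f_i(q(·),·) a.e., q(a) = q_a ) is global, that is, I = I_f. -/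
open MeasureTheory Set

/-- Left Riemann–Liouville fractional integral of order `α` with base point `a`
(for `α = 0` it is the identity). -/
noncomputable def rlInt (a α : ℝ) (q : ℝ → ℝ) (t : ℝ) : ℝ :=
  if α = 0 then q t else (1 / Real.Gamma α) * ∫ τ in a..t, (t - τ) ^ (α - 1) * q τ

/-- `I` is an interval with least element `a`, nonempty interior, and `I ⊆ [a,∞)`. -/
def IsIntervalFrom (a : ℝ) (I : Set ℝ) : Prop :=
  a ∈ I ∧ I ⊆ Set.Ici a ∧ (interior I).Nonempty ∧ I.OrdConnected

/-- `(q, I)` is a local solution of the Caputo Cauchy problem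
`_cD^{α_i}_{a+}[q_i] = F_i(q(·),·)` a.e., `q(a) = qa`, on the domain `Ω`:
`I ⊆ If` is an interval with least element `a` and nonempty interior, `q` is continuous
on `I` with values in `Ω` and `q(a) = qa`, and for each `i` the function
`I^{1-α_i}_{a+}[q_i - (qa)_i]` agrees a.e. on `I` with a locally absolutely continuous
function `t ↦ c + ∫_a^t h` whose derivative `h` (the Caputo fractional derivative of
`q_i`) equals `F_i(q(t), t)` for almost every `t ∈ I`. -/
def IsCaputoLocalSol (a : ℝ) (If : Set ℝ) {m : ℕ}
    (Ω : Set (EuclideanSpace ℝ (Fin m))) (α : Fin m → ℝ)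
    (qa : EuclideanSpace ℝ (Fin m))
    (F : EuclideanSpace ℝ (Fin m) → ℝ → EuclideanSpace ℝ (Fin m))
    (q : ℝ → EuclideanSpace ℝ (Fin m)) (I : Set ℝ) : Prop :=
  IsIntervalFrom a I ∧ I ⊆ If ∧ ContinuousOn q I ∧ (∀ t ∈ I, q t ∈ Ω) ∧ q a = qa ∧
  ∀ i, ∃ c : ℝ, ∃ h : ℝ → ℝ,
    (∀ b ∈ I, MeasureTheory.IntegrableOn h (Set.Icc a b)) ∧
    (∀ᵐ t ∂(MeasureTheory.volume.restrict I),
      rlInt a (1 - α i) (fun τ => q τ i - qa i) t = c + ∫ τ in a..t, h τ) ∧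
    (∀ᵐ t ∂(MeasureTheory.volume.restrict I), h t = F (q t) t i)

/-- `(q, I)` is a maximal local solution of the Caputo Cauchy problem:
every extension `(q', I')` of it satisfies `I' = I`. -/
def IsMaximalSol (a : ℝ) (If : Set ℝ) {m : ℕ}
    (Ω : Set (EuclideanSpace ℝ (Fin m))) (α : Fin m → ℝ)
    (qa : EuclideanSpace ℝ (Fin m))
    (F : EuclideanSpace ℝ (Fin m) → ℝ → EuclideanSpace ℝ (Fin m))
    (q : ℝ → EuclideanSpace ℝ (Fin m)) (I : Set ℝ) : Prop :=
  IsCaputoLocalSol a If Ω α qa F q I ∧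
  ∀ (q' : ℝ → EuclideanSpace ℝ (Fin m)) (I' : Set ℝ),
    IsCaputoLocalSol a If Ω α qa F q' I' → I ⊆ I' → Set.EqOn q' q I → I' = I

/-!
By the semigroup law `I^β I^α = I^{α+β}` and the injectivity of `I^{1-α}` on continuous functions,
a continuous `q` solves the Caputo Cauchy problem exactly when it solves the Volterra integral
equation `q_i = (q_a)_i + I^{α_i}[F_i(q(·), ·)]`. On a compact interval `[a, d]` the right-hand side
is a contraction for the weighted norm `sup ‖q t‖ exp (-λ (t - a))` with `λ` large, because
`I^α` maps a function bounded by `exp (λ (t - a))` to one bounded by `λ^{-α} exp (λ (t - a))`.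
Hence the equation has exactly one solution on every `[a, d] ⊆ I_f`. If a local solution on `I`
misses some `d ∈ I_f`, then the solution on `[a, d]` extends it properly, so it is not maximal.
-/

section IntervalIntegral

lemma abs_integral_mul_le_integral_mul {g w φ : ℝ → ℝ} {s t : ℝ} (hst : s ≤ t)
    (hg : ∀ τ ∈ Ioo s t, 0 ≤ g τ) (hgφ : IntervalIntegrable (fun τ => g τ * φ τ) volume s t)
    (hw : ∀ᵐ τ ∂volume.restrict (Ioc s t), |w τ| ≤ φ τ) :
    |∫ τ in s..t, g τ * w τ| ≤ ∫ τ in s..t, g τ * φ τ := by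
  rw [← Real.norm_eq_abs]
  refine intervalIntegral.norm_integral_le_of_norm_le hst ?_ hgφ
  filter_upwards [(ae_restrict_iff' measurableSet_Ioc).1 hw, volume.ae_ne t] with τ hwτ hτt hτ
  rw [norm_mul, Real.norm_of_nonneg (hg τ ⟨hτ.1, hτ.2.lt_of_ne hτt⟩)]
  exact mul_le_mul_of_nonneg_left (hwτ hτ) (hg τ ⟨hτ.1, hτ.2.lt_of_ne hτt⟩)

variable {E : Type*} [NormedAddCommGroup E]

lemma memLp_top_of_continuousOn_Icc {u : ℝ → E} {a b : ℝ} (hu : ContinuousOn u (Icc a b)) :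
    MemLp u ⊤ (volume.restrict (Ioc a b)) := by
  obtain ⟨C, hC⟩ := isCompact_Icc.exists_bound_of_continuousOn hu
  refine memLp_top_of_bound
    ((hu.mono Ioc_subset_Icc_self).aestronglyMeasurable measurableSet_Ioc) C ?_
  filter_upwards [self_mem_ae_restrict measurableSet_Ioc] with s hs
  exact hC s (Ioc_subset_Icc_self hs)

lemma exists_ae_norm_le_of_memLp_top {T : Type*} [MeasurableSpace T] {μ : Measure T} {u : T → E}
    (hu : MemLp u ⊤ μ) : ∃ M : ℝ, 0 ≤ M ∧ ∀ᵐ t ∂μ, ‖u t‖ ≤ M := by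
  refine ⟨(eLpNormEssSup u μ).toReal, ENNReal.toReal_nonneg, ?_⟩
  filter_upwards [ae_le_eLpNormEssSup (f := u) (μ := μ)] with t ht
  rw [← toReal_enorm]
  exact ENNReal.toReal_mono (by simpa using hu.eLpNorm_ne_top) ht

/-- The open triangle `a < τ < s ≤ t` in the `(s, τ)`-plane, over which iterated integrals
`∫ s in a..t, ∫ τ in a..s, f s τ` are taken; the diagonal is left out since the Abel kernels are
singular there. -/
def triangle (a t : ℝ) : Set (ℝ × ℝ) := {p | a < p.2 ∧ p.2 < p.1 ∧ p.1 ≤ t}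

lemma measurableSet_triangle (a t : ℝ) : MeasurableSet (triangle a t) :=
  (measurableSet_lt measurable_const measurable_snd).inter
    ((measurableSet_lt measurable_snd measurable_fst).inter
      (measurableSet_le measurable_fst measurable_const))

lemma triangle_indicator_eq_left (f : ℝ → ℝ → E) (a s t τ : ℝ) :
    (triangle a t).indicator (Function.uncurry f) (s, τ) =
      (Ioc a t).indicator (fun s => (Ioo a s).indicator (f s) τ) s := by
  simp only [triangle, indicator_apply, mem_ofPred_eq, mem_Ioc, mem_Ioo,
    Function.uncurry_apply_pair]
  grind

lemma triangle_indicator_eq_right (f : ℝ → ℝ → E) (a s t τ : ℝ) :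
    (triangle a t).indicator (Function.uncurry f) (s, τ) =
      (Ioo a t).indicator (fun τ => (Ioc τ t).indicator (fun s => f s τ) s) τ := by
  simp only [triangle, indicator_apply, mem_ofPred_eq, mem_Ioc, mem_Ioo,
    Function.uncurry_apply_pair]
  grind

lemma eqOn_Icc_of_integral_eqOn [NormedSpace ℝ E] [CompleteSpace E] {u v : ℝ → E} {a b : ℝ}
    (hab : a < b) (hu : ContinuousOn u (Icc a b)) (hv : ContinuousOn v (Icc a b))
    (h : EqOn (fun t => ∫ τ in a..t, u τ) (fun t => ∫ τ in a..t, v τ) (Icc a b)) :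
    EqOn u v (Icc a b) := by
  have primitive_hasDeriv : ∀ f : ℝ → E, ContinuousOn f (Icc a b) → ∀ t ∈ Icc a b,
      HasDerivWithinAt (fun x => ∫ τ in a..x, f τ) (f t) (Icc a b) t := by
    intro f hf t ht
    have : Fact (t ∈ Icc a b) := ⟨ht⟩
    have hat : uIcc a t ⊆ Icc a b := uIcc_of_le ht.1 ▸ Icc_subset_Icc_right ht.2
    exact intervalIntegral.integral_hasDerivWithinAt_right (hf.mono hat).intervalIntegrable
      (hf.stronglyMeasurableAtFilter_nhdsWithin measurableSet_Icc t) (hf t ht)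
  intro t ht
  refine (uniqueDiffOn_Icc hab t ht).eq_deriv _ (primitive_hasDeriv u hu t ht) ?_
  exact (primitive_hasDeriv v hv t ht).congr h (h ht)

lemma integral_triangle_indicator_left [NormedSpace ℝ E] (f : ℝ → ℝ → E) (a s t : ℝ) :
    ∫ τ, (triangle a t).indicator (Function.uncurry f) (s, τ) =
      (Ioc a t).indicator (fun s => ∫ τ in a..s, f s τ) s := by
  simp_rw [triangle_indicator_eq_left]
  by_cases hs : s ∈ Ioc a t
  · simp only [indicator_of_mem hs]
    rw [integral_indicator measurableSet_Ioo, intervalIntegral.integral_of_le hs.1.le,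
      integral_Ioc_eq_integral_Ioo]
  · simp only [indicator_of_notMem hs, integral_zero]

lemma integral_triangle_indicator_right [NormedSpace ℝ E] (f : ℝ → ℝ → E) (a t τ : ℝ) :
    ∫ s, (triangle a t).indicator (Function.uncurry f) (s, τ) =
      (Ioo a t).indicator (fun τ => ∫ s in τ..t, f s τ) τ := by
  simp_rw [triangle_indicator_eq_right]
  by_cases hτ : τ ∈ Ioo a t
  · simp only [indicator_of_mem hτ]
    rw [integral_indicator measurableSet_Ioc, intervalIntegral.integral_of_le hτ.2.le]
  · simp only [indicator_of_notMem hτ, integral_zero]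

lemma integral_integral_swap_triangle [NormedSpace ℝ E] {f : ℝ → ℝ → E} {a t : ℝ} (hat : a ≤ t)
    (hf : IntegrableOn (Function.uncurry f) (triangle a t)) :
    ∫ s in a..t, ∫ τ in a..s, f s τ = ∫ τ in a..t, ∫ s in τ..t, f s τ := by
  rw [intervalIntegral.integral_of_le hat, intervalIntegral.integral_of_le hat,
    integral_Ioc_eq_integral_Ioo (f := fun τ => ∫ s in τ..t, f s τ),
    ← integral_indicator measurableSet_Ioc, ← integral_indicator measurableSet_Ioo]
  simp_rw [← integral_triangle_indicator_left, ← integral_triangle_indicator_right]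
  exact integral_integral_swap (hf.integrable_indicator (measurableSet_triangle a t))

lemma integrableOn_triangle {f : ℝ → ℝ → E} {a t : ℝ}
    (hf : AEStronglyMeasurable (Function.uncurry f) (volume.restrict (triangle a t)))
    (hf_right : ∀ᵐ τ ∂volume.restrict (Ioo a t), IntervalIntegrable (fun s => f s τ) volume τ t)
    (hf_norm : IntegrableOn (fun τ => ∫ s in τ..t, ‖f s τ‖) (Ioo a t)) :
    IntegrableOn (Function.uncurry f) (triangle a t) := by
  have hT := measurableSet_triangle a t
  rw [← integrable_indicator_iff hT, Measure.volume_eq_prod, integrable_prod_iff']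
  · constructor
    · filter_upwards [(ae_restrict_iff' measurableSet_Ioo).1 hf_right] with τ hfτ
      simp_rw [triangle_indicator_eq_right]
      by_cases hτ : τ ∈ Ioo a t
      · simp only [indicator_of_mem hτ]
        exact (hfτ hτ).1.integrable_indicator measurableSet_Ioc
      · simp only [indicator_of_notMem hτ]
        exact integrable_zero ℝ E volume
    · have norm_indicator : ∀ p : ℝ × ℝ, ‖(triangle a t).indicator (Function.uncurry f) p‖ =
          (triangle a t).indicator (Function.uncurry fun s τ => ‖f s τ‖) p :=
        fun p => norm_indicator_eq_indicator_norm _ _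
      simp_rw [norm_indicator, integral_triangle_indicator_right]
      exact hf_norm.integrable_indicator measurableSet_Ioo
  · exact (aestronglyMeasurable_indicator_iff hT).2 hf

end IntervalIntegral


section AbelKernel

lemma intervalIntegrable_abelKernel {α : ℝ} (hα : 0 < α) (t x y : ℝ) :
    IntervalIntegrable (fun τ => (t - τ) ^ (α - 1)) volume x y := by
  simpa using (intervalIntegral.intervalIntegrable_rpow' (a := t - x) (b := t - y)
    (by linarith : -1 < α - 1)).comp_sub_left t

lemma integral_abelKernel {α : ℝ} (hα : 0 < α) (t x y : ℝ) :
    ∫ τ in x..y, (t - τ) ^ (α - 1) = ((t - x) ^ α - (t - y) ^ α) / α := by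
  rw [intervalIntegral.integral_comp_sub_left (fun u => u ^ (α - 1)) t,
    integral_rpow (Or.inl (by linarith))]
  simp only [sub_add_cancel]

lemma intervalIntegrable_abelKernel_mul {α : ℝ} (hα : 0 < α) {x y : ℝ} (hxy : x ≤ y) {w : ℝ → ℝ}
    (hw : MemLp w ⊤ (volume.restrict (Ioc x y))) (t : ℝ) :
    IntervalIntegrable (fun τ => (t - τ) ^ (α - 1) * w τ) volume x y := by
  rw [intervalIntegrable_iff_integrableOn_Ioc_of_le hxy]
  exact Integrable.mul_of_top_left (intervalIntegrable_abelKernel hα t x y).1 hw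

lemma integral_abelKernel_mul_rpow {α β : ℝ} (hα : 0 < α) (hβ : 0 < β) {τ t : ℝ} (hτt : τ < t) :
    ∫ s in τ..t, (t - s) ^ (β - 1) * (s - τ) ^ (α - 1) =
      Real.Gamma α * Real.Gamma β / Real.Gamma (α + β) * (t - τ) ^ (α + β - 1) := by
  have hc : 0 < t - τ := sub_pos.2 hτt
  have shift : ∫ s in τ..t, (t - s) ^ (β - 1) * (s - τ) ^ (α - 1) =
      ∫ x in (0 : ℝ)..(t - τ), x ^ (α - 1) * (t - τ - x) ^ (β - 1) := by
    simpa [mul_comm] using intervalIntegral.integral_comp_sub_right (a := τ) (b := t)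
      (fun x => x ^ (α - 1) * (t - τ - x) ^ (β - 1)) τ
  have beta := Complex.betaIntegral_scaled (α : ℂ) (β : ℂ) hc
  rw [Complex.betaIntegral_eq_Gamma_mul_div _ _ (by simpa) (by simpa)] at beta
  rw [shift]
  apply Complex.ofReal_injective
  rw [← intervalIntegral.integral_ofReal]
  trans ∫ x in (0 : ℝ)..(t - τ), (x : ℂ) ^ ((α : ℂ) - 1) * ((t - τ : ℝ) - x : ℂ) ^ ((β : ℂ) - 1)
  · refine intervalIntegral.integral_congr fun x hx => ?_
    rw [uIcc_of_le hc.le] at hx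
    simp [Complex.ofReal_cpow hx.1, Complex.ofReal_cpow (sub_nonneg.2 hx.2)]
  · rw [beta]
    simp [Complex.ofReal_cpow hc.le, ← Complex.Gamma_ofReal, mul_comm]

lemma intervalIntegrable_abelKernel_mul_rpow {α β : ℝ} (hα : 0 < α) (hβ : 0 < β) {τ t : ℝ}
    (hτt : τ < t) :
    IntervalIntegrable (fun s => (t - s) ^ (β - 1) * (s - τ) ^ (α - 1)) volume τ t := by
  -- A non-integrable function has integral `0` by convention, but the Beta integral is positive.
  by_contra not_integrable
  have integral_eq_zero := intervalIntegral.integral_undef not_integrable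
  rw [integral_abelKernel_mul_rpow hα hβ hτt] at integral_eq_zero
  refine (mul_pos (div_pos (mul_pos ?_ ?_) ?_) ?_).ne' integral_eq_zero
  · exact Real.Gamma_pos_of_pos hα
  · exact Real.Gamma_pos_of_pos hβ
  · exact Real.Gamma_pos_of_pos (add_pos hα hβ)
  · exact Real.rpow_pos_of_pos (sub_pos.2 hτt) _

lemma integral_abelKernel_mul_exp_le {α lam : ℝ} (hα : 0 < α) (hlam : 0 < lam) {a t : ℝ}
    (hat : a ≤ t) :
    ∫ τ in a..t, (t - τ) ^ (α - 1) * Real.exp (lam * (τ - a)) ≤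
      (1 / lam) ^ α * Real.Gamma α * Real.exp (lam * (t - a)) := by
  have reflect : ∫ τ in a..t, (t - τ) ^ (α - 1) * Real.exp (lam * (τ - a)) =
      (∫ x in (0 : ℝ)..(t - a), x ^ (α - 1) * Real.exp (-(lam * x))) *
        Real.exp (lam * (t - a)) := by
    rw [← intervalIntegral.integral_mul_const, ← sub_self t,
      ← intervalIntegral.integral_comp_sub_left
        (fun x => x ^ (α - 1) * Real.exp (-(lam * x)) * Real.exp (lam * (t - a))) t]
    refine intervalIntegral.integral_congr fun τ _ => ?_
    simp only [mul_assoc, ← Real.exp_add]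
    ring_nf
  rw [reflect, ← Real.integral_rpow_mul_exp_neg_mul_Ioi hα hlam,
    intervalIntegral.integral_of_le (sub_nonneg.2 hat)]
  refine mul_le_mul_of_nonneg_right (setIntegral_mono_set ?_ ?_ ?_) (Real.exp_pos _).le
  · simpa using integrableOn_rpow_mul_exp_neg_mul_rpow (p := 1) (s := α - 1) (b := lam)
      (by linarith) one_pos hlam
  · filter_upwards [self_mem_ae_restrict measurableSet_Ioi] with x (hx : 0 < x)
    exact mul_nonneg (Real.rpow_nonneg hx.le _) (Real.exp_pos _).le
  · exact Ioc_subset_Ioi_self.eventuallyLE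

end AbelKernel


section FractionalIntegral

lemma rlInt_zero (a : ℝ) (w : ℝ → ℝ) : rlInt a 0 w = w := by
  funext t
  exact if_pos rfl

lemma rlInt_of_pos {α : ℝ} (hα : 0 < α) (a : ℝ) (w : ℝ → ℝ) (t : ℝ) :
    rlInt a α w t = 1 / Real.Gamma α * ∫ τ in a..t, (t - τ) ^ (α - 1) * w τ :=
  if_neg hα.ne'

lemma rlInt_one (a : ℝ) (w : ℝ → ℝ) (t : ℝ) : rlInt a 1 w t = ∫ τ in a..t, w τ := by
  simp [rlInt_of_pos one_pos]

lemma rlInt_self {α : ℝ} (hα : 0 < α) (a : ℝ) (w : ℝ → ℝ) : rlInt a α w a = 0 := by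
  simp [rlInt_of_pos hα]

lemma rlInt_congr {a t α : ℝ} (hat : a ≤ t) {w v : ℝ → ℝ} (hwv : EqOn w v (Icc a t)) :
    rlInt a α w t = rlInt a α v t := by
  unfold rlInt
  rw [hwv (right_mem_Icc.2 hat)]
  congr 2
  refine intervalIntegral.integral_congr fun τ hτ => ?_
  simp only [hwv (uIcc_of_le hat ▸ hτ)]

lemma rlInt_sub {a t α : ℝ} (hα : 0 ≤ α) (hat : a ≤ t) {w v : ℝ → ℝ}
    (hw : MemLp w ⊤ (volume.restrict (Ioc a t))) (hv : MemLp v ⊤ (volume.restrict (Ioc a t))) :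
    rlInt a α (fun τ => w τ - v τ) t = rlInt a α w t - rlInt a α v t := by
  rcases hα.eq_or_lt with rfl | hα
  · simp only [rlInt_zero]
  · simp only [rlInt_of_pos hα, mul_sub]
    rw [intervalIntegral.integral_sub (intervalIntegrable_abelKernel_mul hα hat hw t)
      (intervalIntegrable_abelKernel_mul hα hat hv t), mul_sub]

lemma integrableOn_triangle_abelKernel_mul {a t α β : ℝ} (hα : 0 < α) (hβ : 0 < β) {w : ℝ → ℝ}
    (hw : AEStronglyMeasurable w (volume.restrict (Ioc a t)))
    (hw_kernel : IntervalIntegrable (fun τ => (t - τ) ^ (α + β - 1) * w τ) volume a t) :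
    IntegrableOn (Function.uncurry fun s τ => (t - s) ^ (β - 1) * (s - τ) ^ (α - 1) * w τ)
      (triangle a t) := by
  refine integrableOn_triangle ?_ ?_ ?_
  · refine AEStronglyMeasurable.mul (by fun_prop : Measurable _).aestronglyMeasurable ?_
    exact hw.comp_quasiMeasurePreserving <| Measure.quasiMeasurePreserving_snd.restrict
      fun p hp => ⟨hp.1, hp.2.1.le.trans hp.2.2⟩
  · filter_upwards [self_mem_ae_restrict measurableSet_Ioo] with τ hτ
    exact (intervalIntegrable_abelKernel_mul_rpow hα hβ hτ.2).mul_const (w τ)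
  · have hw_norm : IntegrableOn (fun τ => Real.Gamma α * Real.Gamma β / Real.Gamma (α + β) *
        ‖(t - τ) ^ (α + β - 1) * w τ‖) (Ioo a t) :=
      ((hw_kernel.1.mono_set Ioo_subset_Ioc_self).norm).const_mul _
    refine hw_norm.congr_fun (fun τ hτ => ?_) measurableSet_Ioo
    have kernel_norm : ∫ s in τ..t, ‖(t - s) ^ (β - 1) * (s - τ) ^ (α - 1) * w τ‖ =
        ∫ s in τ..t, (t - s) ^ (β - 1) * (s - τ) ^ (α - 1) * ‖w τ‖ := by
      refine intervalIntegral.integral_congr fun s hs => ?_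
      rw [uIcc_of_le hτ.2.le] at hs
      simp only [norm_mul, Real.norm_of_nonneg (Real.rpow_nonneg (sub_nonneg.2 hs.1) _),
        Real.norm_of_nonneg (Real.rpow_nonneg (sub_nonneg.2 hs.2) _)]
    simp only [kernel_norm]
    rw [intervalIntegral.integral_mul_const, integral_abelKernel_mul_rpow hα hβ hτ.2, norm_mul,
      Real.norm_of_nonneg (Real.rpow_nonneg (sub_nonneg.2 hτ.2.le) _), mul_assoc]

lemma rlInt_rlInt {a t α β : ℝ} (hα : 0 ≤ α) (hβ : 0 ≤ β) (hat : a ≤ t) {w : ℝ → ℝ}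
    (hw : AEStronglyMeasurable w (volume.restrict (Ioc a t)))
    (hw_kernel : IntervalIntegrable (fun τ => (t - τ) ^ (α + β - 1) * w τ) volume a t) :
    rlInt a β (rlInt a α w) t = rlInt a (α + β) w t := by
  rcases hα.eq_or_lt with rfl | hα
  · rw [rlInt_zero, zero_add]
  rcases hβ.eq_or_lt with rfl | hβ
  · rw [rlInt_zero, add_zero]
  have inner (s : ℝ) : (t - s) ^ (β - 1) * rlInt a α w s =
      1 / Real.Gamma α * ∫ τ in a..s, (t - s) ^ (β - 1) * (s - τ) ^ (α - 1) * w τ := by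
    simp only [rlInt_of_pos hα, mul_assoc, intervalIntegral.integral_const_mul]
    ring
  have outer : ∫ τ in a..t, ∫ s in τ..t, (t - s) ^ (β - 1) * (s - τ) ^ (α - 1) * w τ =
      Real.Gamma α * Real.Gamma β / Real.Gamma (α + β) *
        ∫ τ in a..t, (t - τ) ^ (α + β - 1) * w τ := by
    rw [← intervalIntegral.integral_const_mul]
    refine intervalIntegral.integral_congr_Ioo_of_le hat fun τ hτ => ?_
    rw [intervalIntegral.integral_mul_const, integral_abelKernel_mul_rpow hα hβ hτ.2, mul_assoc]
  rw [rlInt_of_pos hβ, rlInt_of_pos (add_pos hα hβ)]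
  simp_rw [inner]
  rw [intervalIntegral.integral_const_mul, integral_integral_swap_triangle hat
    (integrableOn_triangle_abelKernel_mul hα hβ hw hw_kernel), outer]
  have := (Real.Gamma_pos_of_pos hα).ne'
  have := (Real.Gamma_pos_of_pos hβ).ne'
  field_simp


lemma abs_integral_abelKernel_mul_le {s t α M : ℝ} (hα : 0 < α) (hst : s ≤ t) {w : ℝ → ℝ}
    (hwM : ∀ᵐ τ ∂volume.restrict (Ioc s t), |w τ| ≤ M) :
    |∫ τ in s..t, (t - τ) ^ (α - 1) * w τ| ≤ M * (t - s) ^ α / α := by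
  refine (abs_integral_mul_le_integral_mul hst
    (fun τ hτ => Real.rpow_nonneg (sub_nonneg.2 hτ.2.le) _)
    ((intervalIntegrable_abelKernel hα t s t).mul_const M) hwM).trans_eq ?_
  rw [intervalIntegral.integral_mul_const, integral_abelKernel hα, sub_self,
    Real.zero_rpow hα.ne']
  ring

lemma abs_integral_abelKernel_sub_mul_le {a s t α M : ℝ} (hα : 0 < α) (hα_le : α ≤ 1)
    (has : a ≤ s) (hst : s ≤ t) (hM : 0 ≤ M) {w : ℝ → ℝ}
    (hwM : ∀ᵐ τ ∂volume.restrict (Ioc a s), |w τ| ≤ M) :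
    |∫ τ in a..s, ((s - τ) ^ (α - 1) - (t - τ) ^ (α - 1)) * w τ| ≤ M * (t - s) ^ α / α := by
  have kernel_antitone : ∀ τ ∈ Ioo a s, 0 ≤ (s - τ) ^ (α - 1) - (t - τ) ^ (α - 1) := fun τ hτ =>
    sub_nonneg.2 (Real.rpow_le_rpow_of_nonpos (sub_pos.2 hτ.2) (sub_le_sub_right hst τ)
      (sub_nonpos.2 hα_le))
  have kernel_integrable :=
    (intervalIntegrable_abelKernel hα s a s).sub (intervalIntegrable_abelKernel hα t a s)
  refine (abs_integral_mul_le_integral_mul has kernel_antitone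
    (kernel_integrable.mul_const M) hwM).trans ?_
  have : (s - a) ^ α ≤ (t - a) ^ α :=
    Real.rpow_le_rpow (sub_nonneg.2 has) (sub_le_sub_right hst a) hα.le
  rw [intervalIntegral.integral_mul_const, intervalIntegral.integral_sub
    (intervalIntegrable_abelKernel hα s a s) (intervalIntegrable_abelKernel hα t a s),
    integral_abelKernel hα, integral_abelKernel hα, sub_self, Real.zero_rpow hα.ne', ← sub_div,
    mul_comm, ← mul_div_assoc]
  gcongr
  linarith

lemma abs_rlInt_sub_rlInt_le {a s t α M : ℝ} (hα : 0 < α) (hα_le : α ≤ 1) (has : a ≤ s)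
    (hst : s ≤ t) (hM : 0 ≤ M) {w : ℝ → ℝ} (hw : MemLp w ⊤ (volume.restrict (Ioc a t)))
    (hwM : ∀ᵐ τ ∂volume.restrict (Ioc a t), |w τ| ≤ M) :
    |rlInt a α w t - rlInt a α w s| ≤ 2 * M / Real.Gamma (α + 1) * (t - s) ^ α := by
  have h_as : Ioc a s ⊆ Ioc a t := Ioc_subset_Ioc_right hst
  have h_st : Ioc s t ⊆ Ioc a t := Ioc_subset_Ioc_left has
  have hw_as := hw.mono_measure (Measure.restrict_mono_set volume h_as)
  have hw_st := hw.mono_measure (Measure.restrict_mono_set volume h_st)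
  have decomposition : rlInt a α w t - rlInt a α w s = 1 / Real.Gamma α *
      ((∫ τ in s..t, (t - τ) ^ (α - 1) * w τ) -
        ∫ τ in a..s, ((s - τ) ^ (α - 1) - (t - τ) ^ (α - 1)) * w τ) := by
    simp only [sub_mul]
    rw [rlInt_of_pos hα, rlInt_of_pos hα,
      intervalIntegral.integral_sub (intervalIntegrable_abelKernel_mul hα has hw_as s)
        (intervalIntegrable_abelKernel_mul hα has hw_as t),
      ← intervalIntegral.integral_add_adjacent_intervals
        (intervalIntegrable_abelKernel_mul hα has hw_as t)
        (intervalIntegrable_abelKernel_mul hα hst hw_st t)]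
    ring
  have Gamma_pos := Real.Gamma_pos_of_pos hα
  rw [decomposition, abs_mul, abs_of_pos (one_div_pos.2 Gamma_pos)]
  calc 1 / Real.Gamma α * |_ - _|
      ≤ 1 / Real.Gamma α * (M * (t - s) ^ α / α + M * (t - s) ^ α / α) := by
        gcongr
        refine (abs_sub _ _).trans (add_le_add ?_ ?_)
        · exact abs_integral_abelKernel_mul_le hα hst
            (ae_restrict_of_ae_restrict_of_subset h_st hwM)
        · exact abs_integral_abelKernel_sub_mul_le hα hα_le has hst hM
            (ae_restrict_of_ae_restrict_of_subset h_as hwM)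
    _ = 2 * M / Real.Gamma (α + 1) * (t - s) ^ α := by
        rw [Real.Gamma_add_one hα.ne']
        field_simp
        ring

lemma continuousOn_rlInt {a b α : ℝ} (hα : 0 < α) (hα_le : α ≤ 1) {w : ℝ → ℝ}
    (hw : MemLp w ⊤ (volume.restrict (Ioc a b))) : ContinuousOn (rlInt a α w) (Icc a b) := by
  obtain ⟨M, hM, hwM⟩ := exists_ae_norm_le_of_memLp_top hw
  have holder : ∀ s ∈ Icc a b, ∀ t ∈ Icc a b, s ≤ t →
      |rlInt a α w t - rlInt a α w s| ≤ 2 * M / Real.Gamma (α + 1) * |t - s| ^ α := by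
    intro s hs t ht hst
    have h_at : Ioc a t ⊆ Ioc a b := Ioc_subset_Ioc_right ht.2
    rw [abs_of_nonneg (sub_nonneg.2 hst)]
    exact abs_rlInt_sub_rlInt_le hα hα_le hs.1 hst hM
      (hw.mono_measure (Measure.restrict_mono_set volume h_at))
      (ae_restrict_of_ae_restrict_of_subset h_at hwM)
  intro s hs
  have modulus_tendsto : Filter.Tendsto (fun t => 2 * M / Real.Gamma (α + 1) * |t - s| ^ α)
      (nhdsWithin s (Icc a b)) (nhds 0) := by
    have : Continuous fun t => 2 * M / Real.Gamma (α + 1) * |t - s| ^ α :=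
      continuous_const.mul ((continuous_id.sub continuous_const).abs.rpow_const
        fun _ => Or.inr hα.le)
    simpa [Real.zero_rpow hα.ne'] using (this.tendsto s).mono_left nhdsWithin_le_nhds
  refine tendsto_iff_dist_tendsto_zero.2 (squeeze_zero' (.of_forall fun _ => dist_nonneg) ?_
    modulus_tendsto)
  filter_upwards [self_mem_nhdsWithin] with t ht
  rw [Real.dist_eq]
  rcases le_total s t with hst | hts
  · exact holder s hs t ht hst
  · rw [abs_sub_comm, abs_sub_comm t s]
    exact holder t ht s hs hts

lemma continuousOn_rlInt_of_continuousOn {a b α : ℝ} (hα : 0 ≤ α) (hα_le : α ≤ 1) {u : ℝ → ℝ}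
    (hu : ContinuousOn u (Icc a b)) : ContinuousOn (rlInt a α u) (Icc a b) := by
  rcases hα.eq_or_lt with rfl | hα
  · rwa [rlInt_zero]
  · exact continuousOn_rlInt hα hα_le (memLp_top_of_continuousOn_Icc hu)

lemma abs_rlInt_le_of_abs_le_exp {a t α lam C : ℝ} (hα : 0 < α) (hlam : 0 < lam) (hC : 0 ≤ C)
    (hat : a ≤ t) {w : ℝ → ℝ}
    (hw : ∀ᵐ τ ∂volume.restrict (Ioc a t), |w τ| ≤ C * Real.exp (lam * (τ - a))) :
    |rlInt a α w t| ≤ C * (1 / lam) ^ α * Real.exp (lam * (t - a)) := by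
  have Gamma_pos := Real.Gamma_pos_of_pos hα
  have kernel_exp_integrable : IntervalIntegrable
      (fun τ => (t - τ) ^ (α - 1) * (C * Real.exp (lam * (τ - a)))) volume a t :=
    (intervalIntegrable_abelKernel hα t a t).mul_continuousOn (by fun_prop)
  rw [rlInt_of_pos hα, abs_mul, abs_of_pos (one_div_pos.2 Gamma_pos)]
  calc 1 / Real.Gamma α * |∫ τ in a..t, (t - τ) ^ (α - 1) * w τ|
      ≤ 1 / Real.Gamma α * ∫ τ in a..t, (t - τ) ^ (α - 1) * (C * Real.exp (lam * (τ - a))) := by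
        gcongr
        exact abs_integral_mul_le_integral_mul hat
          (fun τ hτ => Real.rpow_nonneg (sub_nonneg.2 hτ.2.le) _) kernel_exp_integrable hw
    _ = C / Real.Gamma α * ∫ τ in a..t, (t - τ) ^ (α - 1) * Real.exp (lam * (τ - a)) := by
        simp only [mul_left_comm _ C, intervalIntegral.integral_const_mul]
        ring
    _ ≤ C / Real.Gamma α * ((1 / lam) ^ α * Real.Gamma α * Real.exp (lam * (t - a))) := by
        gcongr
        exact integral_abelKernel_mul_exp_le hα hlam hat
    _ = C * (1 / lam) ^ α * Real.exp (lam * (t - a)) := by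
        field_simp

lemma rlInt_one_sub_rlInt {a t α : ℝ} (hα : 0 ≤ α) (hα_le : α ≤ 1) (hat : a ≤ t) {w : ℝ → ℝ}
    (hw : MemLp w ⊤ (volume.restrict (Ioc a t))) :
    rlInt a (1 - α) (rlInt a α w) t = ∫ τ in a..t, w τ := by
  rw [rlInt_rlInt hα (sub_nonneg.2 hα_le) hat hw.1, add_sub_cancel, rlInt_one]
  exact intervalIntegrable_abelKernel_mul (by linarith) hat hw t

lemma eqOn_Icc_of_rlInt_eqOn {a b α : ℝ} (hab : a < b) (hα : 0 ≤ α) (hα_le : α ≤ 1)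
    {u v : ℝ → ℝ} (hu : ContinuousOn u (Icc a b)) (hv : ContinuousOn v (Icc a b))
    (h : EqOn (rlInt a α u) (rlInt a α v) (Icc a b)) : EqOn u v (Icc a b) := by
  refine eqOn_Icc_of_integral_eqOn hab hu hv fun t ht => ?_
  have h_at : Icc a t ⊆ Icc a b := Icc_subset_Icc_right ht.2
  simp only [← rlInt_one_sub_rlInt hα hα_le ht.1 (memLp_top_of_continuousOn_Icc (hu.mono h_at)),
    ← rlInt_one_sub_rlInt hα hα_le ht.1 (memLp_top_of_continuousOn_Icc (hv.mono h_at))]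
  exact rlInt_congr ht.1 (h.mono h_at)

lemma eqOn_rlInt_of_ae_rlInt_one_sub_eq {a b α c : ℝ} (hab : a ≤ b) (hα : 0 < α) (hα_le : α ≤ 1)
    {u w : ℝ → ℝ} (hu : ContinuousOn u (Icc a b)) (hua : u a = 0)
    (hw : MemLp w ⊤ (volume.restrict (Ioc a b)))
    (h : ∀ᵐ t ∂volume.restrict (Icc a b), rlInt a (1 - α) u t = c + ∫ τ in a..t, w τ) :
    EqOn u (rlInt a α w) (Icc a b) := by
  rcases hab.eq_or_lt with rfl | hab'
  · intro t ht
    rw [Icc_self, mem_singleton_iff] at ht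
    rw [ht, hua, rlInt_self hα]
  have primitive_continuous : ContinuousOn (fun t => ∫ τ in a..t, w τ) (Icc a b) :=
    (continuousOn_rlInt one_pos le_rfl hw).congr fun t _ => (rlInt_one a w t).symm
  have eq_everywhere : EqOn (rlInt a (1 - α) u) (fun t => c + ∫ τ in a..t, w τ) (Icc a b) :=
    Measure.eqOn_Icc_of_ae_eq volume hab'.ne h
      (continuousOn_rlInt_of_continuousOn (by linarith) (by linarith) hu)
      (continuousOn_const.add primitive_continuous)
  -- Evaluate at `a`: both `I^{1-α} u` and the primitive vanish there.
  have c_eq_zero : c = 0 := by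
    have := eq_everywhere (left_mem_Icc.2 hab)
    rcases hα_le.eq_or_lt with rfl | hα_lt
    · simpa [rlInt_zero, hua] using this.symm
    · simpa [rlInt_self (sub_pos.2 hα_lt)] using this.symm
  refine eqOn_Icc_of_rlInt_eqOn hab' (sub_nonneg.2 hα_le) (by linarith) hu
    (continuousOn_rlInt hα hα_le hw) fun t ht => ?_
  rw [eq_everywhere ht, rlInt_one_sub_rlInt hα.le hα_le ht.1
    (hw.mono_measure (Measure.restrict_mono_set volume (Ioc_subset_Ioc_right ht.2)))]
  simp only [c_eq_zero, zero_add]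

end FractionalIntegral


section WeightedContraction

/-- The rescaling `u ↦ ω • u`, which carries the sup norm to the weighted norm
`sup ‖u x‖ / ω x`. -/
noncomputable def weightEquiv {X E : Type*} [TopologicalSpace X] [NormedAddCommGroup E]
    [NormedSpace ℝ E] (ω : C(X, ℝ)) (hω : ∀ x, 0 < ω x) : C(X, E) ≃ C(X, E) where
  toFun u := ω • u
  invFun u := (⟨fun x => (ω x)⁻¹, ω.continuous.inv₀ fun x => (hω x).ne'⟩ : C(X, ℝ)) • u
  left_inv u := by ext x; exact inv_smul_smul₀ (hω x).ne' (u x)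
  right_inv u := by ext x; exact smul_inv_smul₀ (hω x).ne' (u x)

lemma existsUnique_isFixedPt_of_weighted_contraction {X E : Type*} [TopologicalSpace X]
    [CompactSpace X] [NormedAddCommGroup E] [NormedSpace ℝ E] [CompleteSpace E] {ω : C(X, ℝ)}
    (hω : ∀ x, 0 < ω x) {κ : NNReal} (hκ : κ < 1) {T : C(X, E) → C(X, E)}
    (hT : ∀ u v : C(X, E), ∀ C : ℝ, 0 ≤ C → (∀ x, ‖u x - v x‖ ≤ C * ω x) →
      ∀ x, ‖T u x - T v x‖ ≤ κ * C * ω x) :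
    ∃! u, Function.IsFixedPt T u := by
  let e : C(X, E) ≃ C(X, E) := weightEquiv ω hω
  have norm_symm_sub (u v : C(X, E)) (x : X) :
      ‖e.symm u x - e.symm v x‖ = (ω x)⁻¹ * ‖u x - v x‖ := by
    rw [← norm_smul_of_nonneg (inv_nonneg.2 (hω x).le), smul_sub]
    rfl
  have contracting : ContractingWith κ (e.symm ∘ T ∘ e) := by
    refine ⟨hκ, LipschitzWith.of_dist_le_mul fun u v => ?_⟩
    refine (ContinuousMap.dist_le (by positivity)).2 fun x => ?_
    change dist (e.symm (T (e u)) x) (e.symm (T (e v)) x) ≤ _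
    rw [dist_eq_norm, norm_symm_sub, inv_mul_le_iff₀ (hω x), mul_comm]
    refine hT _ _ _ dist_nonneg (fun y => ?_) x
    rw [mul_comm, ← inv_mul_le_iff₀ (hω y), ← norm_symm_sub, e.symm_apply_apply,
      e.symm_apply_apply, ← dist_eq_norm]
    exact ContinuousMap.dist_apply_le_dist y
  refine ⟨e (contracting.fixedPoint _), ?_, fun u hu => ?_⟩
  · exact e.symm.injective ((contracting.fixedPoint_isFixedPt).trans (e.symm_apply_apply _).symm)
  · refine e.symm_apply_eq.1 (contracting.fixedPoint_unique ?_)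
    change e.symm (T (e (e.symm u))) = e.symm u
    rw [e.apply_symm_apply, hu]

end WeightedContraction

section Superposition

variable {T E E' : Type*} [MeasurableSpace T] {μ : Measure T} [NormedAddCommGroup E']

lemma aestronglyMeasurable_comp_simpleFunc {F : E → T → E'}
    (hF : ∀ x, AEStronglyMeasurable (F x) μ) (g : SimpleFunc T E) :
    AEStronglyMeasurable (fun t => F (g t) t) μ := by
  have sum_over_range : (fun t => F (g t) t) =
      fun t => ∑ x ∈ g.range, (g ⁻¹' {x}).indicator (F x) t := by
    ext t
    have vanishing (x) (_ : x ∈ g.range) (hx : x ≠ g t) :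
        (g ⁻¹' {x}).indicator (F x) t = 0 :=
      indicator_of_notMem (by simpa using hx.symm) (F x)
    rw [Finset.sum_eq_single_of_mem (g t) (g.mem_range_self t) vanishing,
      indicator_of_mem (show t ∈ g ⁻¹' {g t} from rfl)]
  rw [sum_over_range]
  exact Finset.aestronglyMeasurable_fun_sum _ fun x _ => (hF x).indicator (g.measurableSet_fiber x)

lemma aestronglyMeasurable_comp_of_ae_continuous [TopologicalSpace E] {F : E → T → E'}
    (hF : ∀ x, AEStronglyMeasurable (F x) μ) (hF_cont : ∀ᵐ t ∂μ, Continuous fun x => F x t)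
    {q : T → E} (hq : AEStronglyMeasurable q μ) :
    AEStronglyMeasurable (fun t => F (q t) t) μ := by
  obtain ⟨g, hg, hqg⟩ := hq
  have : AEStronglyMeasurable (fun t => F (g t) t) μ := by
    refine aestronglyMeasurable_of_tendsto_ae Filter.atTop
      (fun n => aestronglyMeasurable_comp_simpleFunc hF (hg.approx n)) ?_
    filter_upwards [hF_cont] with t ht
    exact (ht.tendsto _).comp (hg.tendsto_approx t)
  refine this.congr ?_
  filter_upwards [hqg] with t ht
  rw [ht]

lemma ae_lipschitzWith_of_forall_ae [PseudoMetricSpace E] [TopologicalSpace.SeparableSpace E]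
    {L : NNReal} {F : E → T → E'} (hF_cont : ∀ᵐ t ∂μ, Continuous fun x => F x t)
    (hF : ∀ x y, ∀ᵐ t ∂μ, dist (F x t) (F y t) ≤ L * dist x y) :
    ∀ᵐ t ∂μ, LipschitzWith L fun x => F x t := by
  obtain ⟨S, S_countable, S_dense⟩ := TopologicalSpace.exists_countable_dense E
  have lipschitz_on_S : ∀ᵐ t ∂μ, ∀ x ∈ S, ∀ y ∈ S, dist (F x t) (F y t) ≤ L * dist x y :=
    (ae_ball_iff S_countable).2 fun x _ => (ae_ball_iff S_countable).2 fun y _ => hF x y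
  filter_upwards [lipschitz_on_S, hF_cont] with t ht ht_cont
  rw [← lipschitzOnWith_univ, ← S_dense.closure_eq,
    lipschitzOnWith_closure_iff ht_cont.continuousOn]
  exact LipschitzOnWith.of_dist_le_mul ht

/-- A Carathéodory function that is `L`-Lipschitz in its first variable and essentially bounded at
`0`: superposition with it preserves essential boundedness. -/
structure IsLipschitzCaratheodory [NormedAddCommGroup E] (L : NNReal) (F : E → T → E')
    (μ : Measure T) : Prop where
  aestronglyMeasurable (x : E) : AEStronglyMeasurable (F x) μ
  lipschitzWith : ∀ᵐ t ∂μ, LipschitzWith L fun x => F x t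
  memLp_zero : MemLp (F 0) ⊤ μ

variable [NormedAddCommGroup E] {L : NNReal} {F : E → T → E'}

lemma isLipschitzCaratheodory_of_forall_ae [TopologicalSpace.SeparableSpace E] {M : ℝ}
    (hF : ∀ x, AEStronglyMeasurable (F x) μ) (hF_cont : ∀ᵐ t ∂μ, Continuous fun x => F x t)
    (hF_lip : ∀ x y, ∀ᵐ t ∂μ, ‖F y t - F x t‖ ≤ L * ‖y - x‖) (hM : ∀ᵐ t ∂μ, ‖F 0 t‖ ≤ M) :
    IsLipschitzCaratheodory L F μ where
  aestronglyMeasurable := hF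
  lipschitzWith := ae_lipschitzWith_of_forall_ae hF_cont fun x y => by
    simpa only [dist_eq_norm] using hF_lip y x
  memLp_zero := memLp_top_of_bound (hF 0) M hM

lemma IsLipschitzCaratheodory.mono_set {s s' : Set T}
    (hF : IsLipschitzCaratheodory L F (μ.restrict s)) (hs : s' ⊆ s) :
    IsLipschitzCaratheodory L F (μ.restrict s') where
  aestronglyMeasurable x := (hF.aestronglyMeasurable x).mono_set hs
  lipschitzWith := ae_restrict_of_ae_restrict_of_subset hs hF.lipschitzWith
  memLp_zero := hF.memLp_zero.mono_measure (Measure.restrict_mono_set μ hs)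

lemma IsLipschitzCaratheodory.memLp_comp (hF : IsLipschitzCaratheodory L F μ) {q : T → E}
    (hq : MemLp q ⊤ μ) : MemLp (fun t => F (q t) t) ⊤ μ := by
  have comp_measurable : AEStronglyMeasurable (fun t => F (q t) t) μ :=
    aestronglyMeasurable_comp_of_ae_continuous hF.aestronglyMeasurable
      (hF.lipschitzWith.mono fun _ h => h.continuous) hq.1
  have difference_memLp : MemLp (fun t => F (q t) t - F 0 t) ⊤ μ := by
    refine hq.of_le_mul (c := L) (comp_measurable.sub hF.memLp_zero.1) ?_
    filter_upwards [hF.lipschitzWith] with t ht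
    simpa using ht.norm_sub_le (q t) 0
  exact (memLp_congr_ae (.of_forall fun t => sub_add_cancel (F (q t) t) (F 0 t))).1
    (difference_memLp.add hF.memLp_zero)

end Superposition

section PicardOperator

variable {ι : Type*}

/-- The Picard operator `q ↦ q_a + I^α_{a+}[F(q(·), ·)]` of the Caputo Cauchy problem. -/
noncomputable def caputoPicard (a : ℝ) (α : ι → ℝ) (qa : EuclideanSpace ℝ ι)
    (F : EuclideanSpace ℝ ι → ℝ → EuclideanSpace ℝ ι) (q : ℝ → EuclideanSpace ℝ ι) (t : ℝ) :
    EuclideanSpace ℝ ι :=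
  WithLp.toLp 2 fun i => qa i + rlInt a (α i) (fun τ => F (q τ) τ i) t

/-- `q` is a continuous solution on `I` of the Volterra integral equation
`q = q_a + I^α_{a+}[F(q(·), ·)]`, the integrated form of the Caputo Cauchy problem. -/
def IsIntegralSol (a : ℝ) (α : ι → ℝ) (qa : EuclideanSpace ℝ ι)
    (F : EuclideanSpace ℝ ι → ℝ → EuclideanSpace ℝ ι) (q : ℝ → EuclideanSpace ℝ ι)
    (I : Set ℝ) : Prop :=
  ContinuousOn q I ∧ EqOn q (caputoPicard a α qa F q) I

variable {a b t : ℝ} {α : ι → ℝ} {qa : EuclideanSpace ℝ ι} {L : NNReal}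
  {F : EuclideanSpace ℝ ι → ℝ → EuclideanSpace ℝ ι} {q p : ℝ → EuclideanSpace ℝ ι}

lemma caputoPicard_congr (hat : a ≤ t) (hqp : EqOn q p (Icc a t)) :
    caputoPicard a α qa F q t = caputoPicard a α qa F p t := by
  ext i
  exact congrArg (qa i + ·) (rlInt_congr hat fun τ hτ => by simp only [hqp hτ])

lemma IsIntegralSol.mono {I J : Set ℝ} (hq : IsIntegralSol a α qa F q I) (hJI : J ⊆ I) :
    IsIntegralSol a α qa F q J :=
  ⟨hq.1.mono hJI, hq.2.mono hJI⟩

lemma IsIntegralSol.congr (hq : IsIntegralSol a α qa F q (Icc a b)) (hpq : EqOn p q (Icc a b)) :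
    IsIntegralSol a α qa F p (Icc a b) := by
  refine ⟨hq.1.congr hpq, fun t ht => ?_⟩
  rw [hpq ht, hq.2 ht, caputoPicard_congr ht.1 (hpq.mono (Icc_subset_Icc_right ht.2))]

variable [Fintype ι]

lemma norm_le_sum_abs (x : EuclideanSpace ℝ ι) : ‖x‖ ≤ ∑ i, |x i| := by
  rw [EuclideanSpace.norm_eq]
  refine Real.sqrt_le_iff.2 ⟨Finset.sum_nonneg fun _ _ => abs_nonneg _, ?_⟩
  exact Finset.sum_sq_le_sq_sum_of_nonneg fun _ _ => abs_nonneg _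

lemma exists_sum_mul_one_div_rpow_le {α : ι → ℝ} (hα : ∀ i, 0 < α i) (L : ℝ) {ε : ℝ}
    (hε : 0 < ε) : ∃ lam : ℝ, 0 < lam ∧ ∑ i, L * (1 / lam) ^ α i ≤ ε := by
  have sum_tendsto : Filter.Tendsto (fun lam : ℝ => ∑ i, L * (1 / lam) ^ α i) Filter.atTop
      (nhds 0) := by
    rw [← Finset.sum_const_zero (s := (Finset.univ : Finset ι))]
    refine tendsto_finsetSum _ fun i _ => ?_
    have : Filter.Tendsto (fun lam : ℝ => 1 / lam) Filter.atTop (nhds 0) := by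
      simpa only [one_div] using tendsto_inv_atTop_zero (𝕜 := ℝ)
    simpa [Real.zero_rpow (hα i).ne'] using
      (this.rpow_const (p := α i) (Or.inr (hα i).le)).const_mul L
  exact ((Filter.eventually_gt_atTop 0).and (sum_tendsto.eventually_le_const hε)).exists

lemma IsLipschitzCaratheodory.memLp_comp_apply
    (hF : IsLipschitzCaratheodory L F (volume.restrict (Ioc a b))) (hq : ContinuousOn q (Icc a b))
    (i : ι) : MemLp (fun t => F (q t) t i) ⊤ (volume.restrict (Ioc a b)) :=
  (hF.memLp_comp (memLp_top_of_continuousOn_Icc hq)).eval_piLp i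

lemma continuousOn_caputoPicard (hα : ∀ i, 0 < α i ∧ α i ≤ 1)
    (hF : IsLipschitzCaratheodory L F (volume.restrict (Ioc a b)))
    (hq : ContinuousOn q (Icc a b)) : ContinuousOn (caputoPicard a α qa F q) (Icc a b) := by
  refine (PiLp.continuous_toLp 2 _).comp_continuousOn (continuousOn_pi.2 fun i => ?_)
  exact continuousOn_const.add (continuousOn_rlInt (hα i).1 (hα i).2 (hF.memLp_comp_apply hq i))

lemma norm_caputoPicard_sub_le {lam C : ℝ} (hα : ∀ i, 0 < α i) (hlam : 0 < lam) (hC : 0 ≤ C)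
    (hat : a ≤ t) (hF : IsLipschitzCaratheodory L F (volume.restrict (Ioc a t)))
    (hq : ContinuousOn q (Icc a t)) (hp : ContinuousOn p (Icc a t))
    (hqp : ∀ τ ∈ Icc a t, ‖q τ - p τ‖ ≤ C * Real.exp (lam * (τ - a))) :
    ‖caputoPicard a α qa F q t - caputoPicard a α qa F p t‖ ≤
      (∑ i, L * (1 / lam) ^ α i) * C * Real.exp (lam * (t - a)) := by
  have difference_le (i : ι) : ∀ᵐ τ ∂volume.restrict (Ioc a t),
      |F (q τ) τ i - F (p τ) τ i| ≤ L * C * Real.exp (lam * (τ - a)) := by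
    filter_upwards [hF.lipschitzWith, self_mem_ae_restrict measurableSet_Ioc] with τ hτ hτ_mem
    calc |F (q τ) τ i - F (p τ) τ i| ≤ ‖F (q τ) τ - F (p τ) τ‖ :=
          PiLp.norm_apply_le (F (q τ) τ - F (p τ) τ) i
      _ ≤ L * ‖q τ - p τ‖ := hτ.norm_sub_le _ _
      _ ≤ L * (C * Real.exp (lam * (τ - a))) := by
          gcongr
          exact hqp τ (Ioc_subset_Icc_self hτ_mem)
      _ = L * C * Real.exp (lam * (τ - a)) := (mul_assoc _ _ _).symm
  rw [Finset.sum_mul, Finset.sum_mul]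
  refine (norm_le_sum_abs _).trans (Finset.sum_le_sum fun i _ => ?_)
  calc |(caputoPicard a α qa F q t - caputoPicard a α qa F p t) i|
      = |rlInt a (α i) (fun τ => F (q τ) τ i - F (p τ) τ i) t| := by
        rw [rlInt_sub (hα i).le hat (hF.memLp_comp_apply hq i) (hF.memLp_comp_apply hp i)]
        simp only [caputoPicard, PiLp.sub_apply, add_sub_add_left_eq_sub]
    _ ≤ L * C * (1 / lam) ^ α i * Real.exp (lam * (t - a)) :=
        abs_rlInt_le_of_abs_le_exp (hα i) hlam (by positivity) hat (difference_le i)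
    _ = L * (1 / lam) ^ α i * C * Real.exp (lam * (t - a)) := by ring

lemma existsUnique_isIntegralSol_IccExtend (hab : a ≤ b) (hα : ∀ i, 0 < α i ∧ α i ≤ 1)
    (qa : EuclideanSpace ℝ ι) (hF : IsLipschitzCaratheodory L F (volume.restrict (Ioc a b))) :
    ∃! u : C(Icc a b, EuclideanSpace ℝ ι), IsIntegralSol a α qa F (IccExtend hab u) (Icc a b) := by
  obtain ⟨lam, hlam, sum_le⟩ := exists_sum_mul_one_div_rpow_le (fun i => (hα i).1) L one_half_pos
  have extend_continuousOn (u : C(Icc a b, EuclideanSpace ℝ ι)) (t : ℝ) :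
      ContinuousOn (IccExtend hab u) (Icc a t) := u.continuous.Icc_extend'.continuousOn
  let T (u : C(Icc a b, EuclideanSpace ℝ ι)) : C(Icc a b, EuclideanSpace ℝ ι) :=
    ⟨fun t => caputoPicard a α qa F (IccExtend hab u) t, continuousOn_iff_continuous_domRestrict.1
      (continuousOn_caputoPicard hα hF (extend_continuousOn u b))⟩
  let ω : C(Icc a b, ℝ) := ⟨fun t => Real.exp (lam * (t - a)), by fun_prop⟩
  have fixed_iff (u : C(Icc a b, EuclideanSpace ℝ ι)) :
      IsIntegralSol a α qa F (IccExtend hab u) (Icc a b) ↔ Function.IsFixedPt T u := by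
    constructor
    · intro hu
      ext1 t
      exact (hu.2 t.2).symm.trans (IccExtend_val hab u t)
    · intro hu
      refine ⟨extend_continuousOn u b, fun t ht => ?_⟩
      rw [IccExtend_of_mem hab u ht]
      exact (DFunLike.congr_fun hu ⟨t, ht⟩).symm
  simp only [fixed_iff]
  refine existsUnique_isFixedPt_of_weighted_contraction (ω := ω) (fun t => Real.exp_pos _)
    (κ := 1 / 2) (by norm_num) fun u v C hC huv t => ?_
  refine (norm_caputoPicard_sub_le (fun i => (hα i).1) hlam hC t.2.1
    (hF.mono_set (Ioc_subset_Ioc_right t.2.2)) (extend_continuousOn u t) (extend_continuousOn v t)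
    fun τ hτ => ?_).trans ?_
  · have hτb : τ ∈ Icc a b := ⟨hτ.1, hτ.2.trans t.2.2⟩
    rw [IccExtend_of_mem hab _ hτb, IccExtend_of_mem hab _ hτb]
    exact huv ⟨τ, hτb⟩
  · refine mul_le_mul_of_nonneg_right (mul_le_mul_of_nonneg_right ?_ hC) (Real.exp_pos _).le
    simpa using sum_le

lemma exists_isIntegralSol (hab : a ≤ b) (hα : ∀ i, 0 < α i ∧ α i ≤ 1)
    (qa : EuclideanSpace ℝ ι) (hF : IsLipschitzCaratheodory L F (volume.restrict (Ioc a b))) :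
    ∃ q, IsIntegralSol a α qa F q (Icc a b) :=
  (existsUnique_isIntegralSol_IccExtend hab hα qa hF).exists.imp' _ fun _ => id

lemma IsIntegralSol.eqOn_Icc (hα : ∀ i, 0 < α i ∧ α i ≤ 1)
    (hF : IsLipschitzCaratheodory L F (volume.restrict (Ioc a b)))
    (hq : IsIntegralSol a α qa F q (Icc a b)) (hp : IsIntegralSol a α qa F p (Icc a b)) :
    EqOn q p (Icc a b) := by
  intro t ht
  have hab : a ≤ b := ht.1.trans ht.2
  have restrict_isIntegralSol (r) (hr : IsIntegralSol a α qa F r (Icc a b)) :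
      IsIntegralSol a α qa F (IccExtend hab (⟨(Icc a b).domRestrict r,
        continuousOn_iff_continuous_domRestrict.1 hr.1⟩ : C(Icc a b, _))) (Icc a b) :=
    hr.congr fun s hs => IccExtend_of_mem hab _ hs
  exact DFunLike.congr_fun ((existsUnique_isIntegralSol_IccExtend hab hα qa hF).unique
    (restrict_isIntegralSol q hq) (restrict_isIntegralSol p hp)) ⟨t, ht⟩

end PicardOperator

section CaputoCauchyProblem

variable {m : ℕ} {a : ℝ} {If I : Set ℝ} {α : Fin m → ℝ} {qa : EuclideanSpace ℝ (Fin m)}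
  {F : EuclideanSpace ℝ (Fin m) → ℝ → EuclideanSpace ℝ (Fin m)} {L : NNReal}
  {q p : ℝ → EuclideanSpace ℝ (Fin m)}

lemma IsIntervalFrom.Icc_subset (hI : IsIntervalFrom a I) {b : ℝ} (hb : b ∈ I) : Icc a b ⊆ I :=
  hI.2.2.2.out hI.1 hb

lemma isIntervalFrom_Icc {b : ℝ} (hab : a < b) : IsIntervalFrom a (Icc a b) :=
  ⟨left_mem_Icc.2 hab.le, Icc_subset_Ici_self, by simpa [interior_Icc] using hab, ordConnected_Icc⟩

lemma IsCaputoLocalSol.isIntegralSol_Icc {b : ℝ} (hα : ∀ i, 0 < α i ∧ α i ≤ 1)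
    (hq : IsCaputoLocalSol a If univ α qa F q I) (hb : b ∈ I)
    (hF : IsLipschitzCaratheodory L F (volume.restrict (Ioc a b))) :
    IsIntegralSol a α qa F q (Icc a b) := by
  obtain ⟨hI, -, q_continuousOn, -, q_initial, q_derivative⟩ := hq
  have h_ab : Icc a b ⊆ I := hI.Icc_subset hb
  have q_continuousOn_Icc := q_continuousOn.mono h_ab
  refine ⟨q_continuousOn_Icc, fun t ht => ?_⟩
  ext i
  obtain ⟨c, h, -, primitive, h_eq⟩ := q_derivative i
  have h_eq_Ioc : ∀ᵐ τ, τ ∈ Ioc a b → h τ = F (q τ) τ i :=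
    (ae_restrict_iff' measurableSet_Ioc).1
      (ae_restrict_of_ae_restrict_of_subset (Ioc_subset_Icc_self.trans h_ab) h_eq)
  have integral_eq : ∀ᵐ t ∂volume.restrict (Icc a b),
      rlInt a (1 - α i) (fun τ => q τ i - qa i) t = c + ∫ τ in a..t, F (q τ) τ i := by
    filter_upwards [ae_restrict_of_ae_restrict_of_subset h_ab primitive,
      self_mem_ae_restrict measurableSet_Icc] with s hs hs_mem
    rw [hs, intervalIntegral.integral_congr_ae]
    filter_upwards [h_eq_Ioc] with τ hτ hτ_mem
    rw [uIoc_of_le hs_mem.1] at hτ_mem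
    exact hτ ⟨hτ_mem.1, hτ_mem.2.trans hs_mem.2⟩
  have q_sub_eq := eqOn_rlInt_of_ae_rlInt_one_sub_eq (hI.2.1 hb) (hα i).1 (hα i).2
    (((EuclideanSpace.proj i).continuous.comp_continuousOn q_continuousOn_Icc).sub
      continuousOn_const)
    (by simp [q_initial]) (hF.memLp_comp_apply q_continuousOn_Icc i) integral_eq ht
  exact sub_eq_iff_eq_add'.1 q_sub_eq

lemma IsIntegralSol.isCaputoLocalSol (hα : ∀ i, 0 < α i ∧ α i ≤ 1) (hI : IsIntervalFrom a I)
    (hIf : I ⊆ If) (hF : ∀ b ∈ I, ∃ L, IsLipschitzCaratheodory L F (volume.restrict (Ioc a b)))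
    (hq : IsIntegralSol a α qa F q I) : IsCaputoLocalSol a If univ α qa F q I := by
  have memLp_comp (b) (hb : b ∈ I) (i) :
      MemLp (fun τ => F (q τ) τ i) ⊤ (volume.restrict (Ioc a b)) := by
    obtain ⟨L, hFL⟩ := hF b hb
    exact hFL.memLp_comp_apply (hq.1.mono (hI.Icc_subset hb)) i
  have q_apply (t) (ht : t ∈ I) (i) : q t i = qa i + rlInt a (α i) (fun τ => F (q τ) τ i) t :=
    congrArg (· i) (hq.2 ht)
  refine ⟨hI, hIf, hq.1, fun _ _ => mem_univ _, ?_, fun i =>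
    ⟨0, fun t => F (q t) t i, fun b hb => ?_, ?_, .of_forall fun _ => rfl⟩⟩
  · ext i
    rw [q_apply a hI.1 i, rlInt_self (hα i).1, add_zero]
  · exact (integrableOn_Icc_iff_integrableOn_Ioc ..).2 ((memLp_comp b hb i).integrable le_top)
  · filter_upwards [self_mem_ae_restrict hI.2.2.2.measurableSet] with t ht
    have q_sub_eq : EqOn (fun τ => q τ i - qa i) (rlInt a (α i) fun τ => F (q τ) τ i) (Icc a t) :=
      fun τ hτ => sub_eq_iff_eq_add'.2 (q_apply τ (hI.Icc_subset ht hτ) i)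
    rw [zero_add, rlInt_congr (hI.2.1 ht) q_sub_eq,
      rlInt_one_sub_rlInt (hα i).1.le (hα i).2 (hI.2.1 ht) (memLp_comp t ht i)]

lemma IsCaputoLocalSol.eqOn {J : Set ℝ} (hα : ∀ i, 0 < α i ∧ α i ≤ 1)
    (hF : ∀ b ∈ I, ∃ L, IsLipschitzCaratheodory L F (volume.restrict (Ioc a b)))
    (hq : IsCaputoLocalSol a If univ α qa F q I) (hp : IsCaputoLocalSol a If univ α qa F p J)
    (hIJ : I ⊆ J) : EqOn p q I := by
  intro t ht
  obtain ⟨L, hFL⟩ := hF t ht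
  exact (hp.isIntegralSol_Icc hα (hIJ ht) hFL).eqOn_Icc hα hFL (hq.isIntegralSol_Icc hα ht hFL)
    (right_mem_Icc.2 (hq.1.2.1 ht))

lemma IsCaputoLocalSol.exists_extension_Icc {d : ℝ} (hα : ∀ i, 0 < α i ∧ α i ≤ 1)
    (had : a < d) (hdf : Icc a d ⊆ If) (hId : I ⊆ Icc a d)
    (hF : IsLipschitzCaratheodory L F (volume.restrict (Ioc a d)))
    (hq : IsCaputoLocalSol a If univ α qa F q I) :
    ∃ p, IsCaputoLocalSol a If univ α qa F p (Icc a d) ∧ EqOn p q I := by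
  have hF_Ioc (b) (hb : b ∈ Icc a d) :
      ∃ L, IsLipschitzCaratheodory L F (volume.restrict (Ioc a b)) :=
    ⟨L, hF.mono_set (Ioc_subset_Ioc_right hb.2)⟩
  obtain ⟨p, p_integralSol⟩ := exists_isIntegralSol had.le hα qa hF
  have hp := p_integralSol.isCaputoLocalSol hα (isIntervalFrom_Icc had) hdf hF_Ioc
  exact ⟨p, hp, hq.eqOn hα (fun b hb => hF_Ioc b (hId hb)) hp hId⟩

end CaputoCauchyProblem

theorem statement8 (a : ℝ) (If : Set ℝ)
    (haI : a ∈ If) (hIsub : If ⊆ Set.Ici a) (hIint : (interior If).Nonempty)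
    (hIord : If.OrdConnected)
    (m : ℕ) (hm : 0 < m)
    (α : Fin m → ℝ) (hα : ∀ i, 0 < α i ∧ α i ≤ 1)
    (qa : EuclideanSpace ℝ (Fin m))
    (F : EuclideanSpace ℝ (Fin m) → ℝ → EuclideanSpace ℝ (Fin m))
    -- Carathéodory assumptions
    (hFmeas : ∀ x, MeasureTheory.AEStronglyMeasurable (fun t => F x t)
      (MeasureTheory.volume.restrict If))
    (hFcont : ∀ᵐ t ∂(MeasureTheory.volume.restrict If), Continuous fun x => F x t)
    -- `F` is bounded on compacts
    (hbdd : ∀ K : Set (EuclideanSpace ℝ (Fin m)), IsCompact K →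
      ∀ c ∈ If, ∀ d ∈ If, c ≤ d → ∃ M : ℝ, 0 ≤ M ∧ ∀ x ∈ K,
        ∀ᵐ t ∂(MeasureTheory.volume.restrict (Set.Icc c d)), ‖F x t‖ ≤ M)
    -- `F` is globally Lipschitz continuous in its first variable
    (hlip : ∀ c ∈ If, ∀ d ∈ If, c ≤ d → ∃ L : ℝ, 0 ≤ L ∧
      ∀ x₁ x₂ : EuclideanSpace ℝ (Fin m),
        ∀ᵐ t ∂(MeasureTheory.volume.restrict (Set.Icc c d)),
          ‖F x₂ t - F x₁ t‖ ≤ L * ‖x₂ - x₁‖) :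
    ∀ (q : ℝ → EuclideanSpace ℝ (Fin m)) (I : Set ℝ),
      IsMaximalSol a If (Set.univ : Set (EuclideanSpace ℝ (Fin m))) α qa F q I →
      I = If := by
  rintro q I ⟨hq, q_maximal⟩
  by_contra I_ne_If
  obtain ⟨d, hd, hdI⟩ := exists_of_ssubset (hq.2.1.ssubset_of_ne I_ne_If)
  have lt_d : ∀ t ∈ I, t < d := fun t ht =>
    lt_of_not_ge fun hdt => hdI (hq.1.Icc_subset ht ⟨hIsub hd, hdt⟩)
  have had : a < d := lt_d a hq.1.1
  have I_subset : I ⊆ Icc a d := fun t ht => ⟨hq.1.2.1 ht, (lt_d t ht).le⟩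
  have hIcc : Icc a d ⊆ If := hIord.out haI hd
  obtain ⟨L, hL, F_lipschitz⟩ := hlip a haI d hd had.le
  obtain ⟨M, -, F_bounded⟩ := hbdd {0} isCompact_singleton a haI d hd had.le
  have hF : IsLipschitzCaratheodory ⟨L, hL⟩ F (volume.restrict (Icc a d)) :=
    isLipschitzCaratheodory_of_forall_ae (fun x => (hFmeas x).mono_set hIcc)
      (ae_restrict_of_ae_restrict_of_subset hIcc hFcont) F_lipschitz (F_bounded 0 rfl)
  obtain ⟨p, hp, hpq⟩ := hq.exists_extension_Icc hα had hIcc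
    I_subset (hF.mono_set Ioc_subset_Icc_self)
  have Icc_eq_I : Icc a d = I :=
    q_maximal p (Icc a d) hp I_subset hpq
  exact hdI (Icc_eq_I ▸ right_mem_Icc.2 had.le)
end

section
/- Let a ∈ ℝ, let I be an interval with least element a, nonempty interior, and I ⊂ [a,∞), let m ∈ ℕ*, let α = (α_{ij}) ∈ (0,1]^{m×m}, and let A : I → ℝ^{m×m} be locally essentially bounded. Suppose Z : {(t,s) : s,t ∈ I, s ≤ t} → ℝ^{m×m} satisfies, for almost every s, t ∈ I with s < t and all i, j ∈ {1,…,m}, the state-transition integral equation Z_{ij}(t,s) = ((t−s)^{α_{ij}−1}/Γ(α_{ij}))·δ_{ij} + (1/Γ(α_{ij})) ∫_s^t (t−τ)^{α_{ij}−1} (A(τ) Z(τ,s))_{ij} dτ (δ_{ij} the Kronecker delta). Then for every b ∈ I with b > a there exists Θ ≥ 0 such that |Z_{ij}(t,s)| ≤ (t−s)^{α_{ij}−1}·Θ for almost every a ≤ s < t ≤ b and every i, j ∈ {1,…,m}; in particular, for almost every t ∈ I with t > a, the function s ↦ Z(t,s) is Lebesgue integrable on [a,t]. -/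
open MeasureTheory Set

/-!
Write `g_α(r) = r^(α-1) / Γ(α)` for `r > 0`. A column `x` of `Z(·, s)` satisfies a linear
convolution inequality `|x i| ≤ g_{α i}(· - s) + M (∑ k, |x k|) ⋆ g_{α i}`. Multiplying it by
`e^{-lt}` keeps its form and replaces each kernel by `e^{-l·} g_{α i}`, whose mass `l^{-α i}` is
small for large `l`; integrating the inequality for the positive part of a difference then shows
that an integrable subsolution lies below any supersolution. For large `l` the multiple
`2 g_{α i}(· - s)` is a supersolution, because on a bounded interval
`g_β ⋆ (e^{-l·} g_α) ≤ ε g_α`. A solution on `(s, b]` is at first known to be integrable only on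
`(s, T]` with `T < b`, but the bound obtained does not depend on `T`. The bound is integrable in
`s`, which gives the second assertion after exchanging the order of the two almost-everywhere
quantifiers.
-/

open Filter Topology
open scoped ENNReal NNReal

section Comparison

variable {G ι : Type*} [MeasurableSpace G] [AddGroup G] {μ : Measure G}

theorem lconvolution_le_lconvolution_of_ae_le {f f' : G → ℝ≥0∞} (hf : f ≤ᵐ[μ] f') (g : G → ℝ≥0∞)
    (t : G) : (f ⋆ₗ[μ] g) t ≤ (f' ⋆ₗ[μ] g) t :=
  lintegral_mono_ae <| hf.mono fun _ h => mul_le_mul_left h _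

theorem lconvolution_le_mul_lconvolution_of_ae_le {C : ℝ≥0∞} (hC : C ≠ ∞) {f f' : G → ℝ≥0∞}
    (hf : ∀ᵐ τ ∂μ, f τ ≤ C * f' τ) (g : G → ℝ≥0∞) (t : G) :
    (f ⋆ₗ[μ] g) t ≤ C * (f' ⋆ₗ[μ] g) t := by
  refine (lconvolution_le_lconvolution_of_ae_le hf g t).trans_eq ?_
  simp only [lconvolution_def, mul_assoc]
  exact lintegral_const_mul' _ _ hC

variable [MeasurableAdd₂ G] [MeasurableNeg G]

theorem add_lconvolution {f f' g : G → ℝ≥0∞} (hf : AEMeasurable f μ) (hg : Measurable g) :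
    (f + f') ⋆ₗ[μ] g = f ⋆ₗ[μ] g + f' ⋆ₗ[μ] g := by
  ext t
  simp only [lconvolution_def, Pi.add_apply, add_mul]
  exact lintegral_add_left' (by fun_prop) _

variable [SFinite μ] [μ.IsAddLeftInvariant]

theorem lintegral_lconvolution {f g : G → ℝ≥0∞} (hf : AEMeasurable f μ) (hg : AEMeasurable g μ) :
    ∫⁻ t, (f ⋆ₗ[μ] g) t ∂μ = (∫⁻ t, f t ∂μ) * ∫⁻ t, g t ∂μ := by
  simp only [lconvolution_def]
  rw [lintegral_lintegral_swap (by fun_prop), ← lintegral_mul_const'' _ hf]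
  refine lintegral_congr fun y => ?_
  have g_meas : AEMeasurable (fun t => g (-y + t)) μ :=
    hg.comp_quasiMeasurePreserving (measurePreserving_add_left μ (-y)).quasiMeasurePreserving
  rw [lintegral_const_mul'' _ g_meas, lintegral_add_left_eq_self g]

variable [Fintype ι] {κ : ι → G → ℝ≥0∞} {C : ℝ≥0∞}

theorem ae_eq_zero_of_le_lconvolution {w : ι → G → ℝ≥0∞} (hκ : ∀ i, Measurable (κ i))
    (hκC : C * ∑ i, ∫⁻ t, κ i t ∂μ < 1) (hw : ∀ i, AEMeasurable (w i) μ)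
    (hwfin : ∀ i, ∫⁻ t, w i t ∂μ ≠ ∞)
    (hle : ∀ i, ∀ᵐ t ∂μ, w i t ≤ C * ((∑ k, w k) ⋆ₗ[μ] κ i) t) (i : ι) :
    w i =ᵐ[μ] 0 := by
  set mass := ∑ i, ∫⁻ t, w i t ∂μ
  have hsum : AEMeasurable (∑ k, w k) μ := Finset.aemeasurable_sum _ fun k _ => hw k
  have mass_sum : ∫⁻ t, (∑ k, w k) t ∂μ = mass := by
    simp only [Finset.sum_apply]
    exact lintegral_finsetSum' _ fun k _ => hw k
  have mass_le : mass ≤ C * (∑ i, ∫⁻ t, κ i t ∂μ) * mass := by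
    rw [mul_assoc, Finset.sum_mul, Finset.mul_sum]
    refine Finset.sum_le_sum fun i _ => (lintegral_mono_ae (hle i)).trans_eq ?_
    rw [lintegral_const_mul'' _ (by fun_prop), lintegral_lconvolution hsum (hκ i).aemeasurable,
      mass_sum, mul_comm mass]
  have mass_eq_zero : mass = 0 := by
    by_contra hne
    exact mass_le.not_gt <| (ENNReal.mul_lt_mul_left hne
      (ENNReal.sum_ne_top.2 fun i _ => hwfin i) hκC).trans_eq (one_mul _)
  have lintegral_eq_zero := Finset.sum_eq_zero_iff.1 mass_eq_zero i (Finset.mem_univ i)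
  exact (lintegral_eq_zero_iff' (hw i)).1 lintegral_eq_zero

theorem ae_le_of_le_add_lconvolution {f U V : ι → G → ℝ≥0∞} {S : Set G} (hS : MeasurableSet S)
    (hκ : ∀ i, Measurable (κ i)) (hκC : C * ∑ i, ∫⁻ t, κ i t ∂μ < 1)
    (hU : ∀ i, AEMeasurable (U i) μ) (hV : ∀ i, AEMeasurable (V i) μ)
    (hUfin : ∀ i, ∫⁻ t in S, U i t ∂μ ≠ ∞)
    (hUle : ∀ i, ∀ᵐ t ∂μ.restrict S,
      U i t ≤ f i t + C * ((∑ k, S.indicator (U k)) ⋆ₗ[μ] κ i) t)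
    (hVle : ∀ i, ∀ᵐ t ∂μ.restrict S, f i t + C * ((∑ k, V k) ⋆ₗ[μ] κ i) t ≤ V i t) (i : ι) :
    ∀ᵐ t ∂μ.restrict S, U i t ≤ V i t := by
  set w : ι → G → ℝ≥0∞ := fun i => S.indicator (U i - V i) with hw
  have w_meas (i) : AEMeasurable (w i) μ := ((hU i).sub (hV i)).indicator hS
  have w_fin (i) : ∫⁻ t, w i t ∂μ ≠ ∞ := by
    rw [lintegral_indicator hS]
    exact ne_top_of_le_ne_top (hUfin i) (lintegral_mono fun t => tsub_le_self)
  have U_le (k) : S.indicator (U k) ≤ w k + V k := fun t => by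
    by_cases ht : t ∈ S
    · simp only [hw, Pi.add_apply, indicator_of_mem ht]
      exact le_tsub_add
    · simp [ht]
  have w_le (i) : ∀ᵐ t ∂μ, w i t ≤ C * ((∑ k, w k) ⋆ₗ[μ] κ i) t := by
    filter_upwards [(ae_restrict_iff' hS).1 (hUle i), (ae_restrict_iff' hS).1 (hVle i)]
      with t hUt hVt
    by_cases ht : t ∈ S
    swap
    · simp [hw, ht]
    have conv_le : ((∑ k, S.indicator (U k)) ⋆ₗ[μ] κ i) t ≤
        ((∑ k, V k) ⋆ₗ[μ] κ i) t + ((∑ k, w k) ⋆ₗ[μ] κ i) t := by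
      rw [← Pi.add_apply, ← add_lconvolution (Finset.aemeasurable_sum _ fun k _ => hV k) (hκ i),
        add_comm, ← Finset.sum_add_distrib]
      refine lconvolution_le_lconvolution_of_ae_le (.of_forall ?_) _ t
      exact Finset.sum_le_sum fun k _ => U_le k
    simp only [hw, indicator_of_mem ht, Pi.sub_apply, tsub_le_iff_left]
    calc U i t ≤ f i t + C * ((∑ k, S.indicator (U k)) ⋆ₗ[μ] κ i) t := hUt ht
      _ ≤ f i t + C * (((∑ k, V k) ⋆ₗ[μ] κ i) t + ((∑ k, w k) ⋆ₗ[μ] κ i) t) := by gcongr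
      _ = (f i t + C * ((∑ k, V k) ⋆ₗ[μ] κ i) t) + C * ((∑ k, w k) ⋆ₗ[μ] κ i) t := by ring
      _ ≤ V i t + C * ((∑ k, w k) ⋆ₗ[μ] κ i) t := by gcongr; exact hVt ht
  have w_eq_zero := ae_eq_zero_of_le_lconvolution hκ hκC w_meas w_fin w_le i
  filter_upwards [ae_restrict_of_ae w_eq_zero, ae_restrict_mem hS] with t hwt ht
  simpa only [hw, indicator_of_mem ht, Pi.sub_apply, Pi.zero_apply, tsub_eq_zero_iff_le] using hwt

end Comparison

section ExpDamp

/-- The function `f` damped by the weight `e^{-lt}`. Damping commutes with convolution, and for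
large `l` it makes the mass of a Riemann–Liouville kernel small. -/
noncomputable def expDamp (l : ℝ) (f : ℝ → ℝ≥0∞) (t : ℝ) : ℝ≥0∞ :=
  ENNReal.ofReal (Real.exp (-(l * t))) * f t

variable {l : ℝ} {f g : ℝ → ℝ≥0∞}

theorem measurable_expDamp (l : ℝ) (hf : Measurable f) : Measurable (expDamp l f) := by
  unfold expDamp
  fun_prop

theorem aemeasurable_expDamp (l : ℝ) (hf : AEMeasurable f) : AEMeasurable (expDamp l f) := by
  unfold expDamp
  fun_prop

theorem expDamp_le_expDamp {t : ℝ} (h : f t ≤ g t) : expDamp l f t ≤ expDamp l g t :=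
  mul_le_mul_right h _

theorem expDamp_indicator (l : ℝ) (S : Set ℝ) (f : ℝ → ℝ≥0∞) :
    expDamp l (S.indicator f) = S.indicator (expDamp l f) := by
  ext t
  by_cases ht : t ∈ S <;> simp [expDamp, ht]

theorem expDamp_sum {ι : Type*} (l : ℝ) (s : Finset ι) (f : ι → ℝ → ℝ≥0∞) :
    expDamp l (∑ i ∈ s, f i) = ∑ i ∈ s, expDamp l (f i) := by
  ext t
  simp only [expDamp, Finset.sum_apply, Finset.mul_sum]

theorem expDamp_lconvolution (l : ℝ) (f g : ℝ → ℝ≥0∞) :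
    expDamp l (f ⋆ₗ g) = expDamp l f ⋆ₗ expDamp l g := by
  ext t
  simp only [expDamp, lconvolution_def]
  rw [← lintegral_const_mul' _ _ ENNReal.ofReal_ne_top]
  refine lintegral_congr fun τ => ?_
  rw [mul_mul_mul_comm, ← ENNReal.ofReal_mul (Real.exp_nonneg _), ← Real.exp_add]
  congr 4
  ring

theorem expDamp_le_mul (hl : 0 ≤ l) {s t : ℝ} (hst : s ≤ t) :
    expDamp l f t ≤ ENNReal.ofReal (Real.exp (-(l * s))) * f t := by
  unfold expDamp
  gcongr

theorem setLIntegral_Ioc_expDamp_ne_top (hl : 0 ≤ l) {s t : ℝ} (hf : ∫⁻ τ in Ioc s t, f τ ≠ ∞) :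
    ∫⁻ τ in Ioc s t, expDamp l f τ ≠ ∞ := by
  refine ne_top_of_le_ne_top (ENNReal.mul_ne_top ENNReal.ofReal_ne_top hf)
    (b := ENNReal.ofReal (Real.exp (-(l * s))) * ∫⁻ τ in Ioc s t, f τ) ?_
  rw [← lintegral_const_mul' _ _ ENNReal.ofReal_ne_top]
  exact setLIntegral_mono' measurableSet_Ioc fun τ hτ => expDamp_le_mul hl hτ.1.le

theorem eq_exp_mul_expDamp (l : ℝ) (f : ℝ → ℝ≥0∞) (t : ℝ) :
    f t = ENNReal.ofReal (Real.exp (l * t)) * expDamp l f t := by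
  rw [expDamp, ← mul_assoc, ← ENNReal.ofReal_mul (Real.exp_nonneg _), ← Real.exp_add]
  simp

theorem setLIntegral_Ioc_ne_top_of_expDamp (hl : 0 ≤ l) {s t : ℝ}
    (hf : ∫⁻ τ in Ioc s t, expDamp l f τ ≠ ∞) : ∫⁻ τ in Ioc s t, f τ ≠ ∞ := by
  refine ne_top_of_le_ne_top (ENNReal.mul_ne_top ENNReal.ofReal_ne_top hf)
    (b := ENNReal.ofReal (Real.exp (l * t)) * ∫⁻ τ in Ioc s t, expDamp l f τ) ?_
  rw [← lintegral_const_mul' _ _ ENNReal.ofReal_ne_top]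
  refine setLIntegral_mono' measurableSet_Ioc fun τ hτ => ?_
  rw [eq_exp_mul_expDamp l f τ]
  gcongr
  exact hτ.2

theorem lconvolution_comp_sub (f g : ℝ → ℝ≥0∞) (s t : ℝ) :
    ((fun τ => f (τ - s)) ⋆ₗ g) t = (f ⋆ₗ g) (t - s) := by
  simp only [lconvolution_def]
  rw [← lintegral_add_right_eq_self (fun τ => f (τ - s) * _) s]
  refine lintegral_congr fun τ => ?_
  congr 2 <;> ring

end ExpDamp

section Kernel

/-- The Riemann–Liouville kernel `r ^ (α - 1) / Γ(α)`, extended by `0` to `r ≤ 0` so that the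
fractional integral of order `α` is convolution with it. -/
noncomputable def rlKernel (α : ℝ) : ℝ → ℝ≥0∞ :=
  (Ioi 0).indicator fun r => ENNReal.ofReal (r ^ (α - 1) / Real.Gamma α)

variable {α β γ l L r : ℝ}

theorem rlKernel_of_pos (hr : 0 < r) :
    rlKernel α r = ENNReal.ofReal (r ^ (α - 1) / Real.Gamma α) :=
  indicator_of_mem (mem_Ioi.2 hr) _

theorem rlKernel_of_nonpos (hr : r ≤ 0) : rlKernel α r = 0 :=
  indicator_of_notMem (notMem_Ioi.2 hr) _

theorem measurable_rlKernel (α : ℝ) : Measurable (rlKernel α) :=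
  Measurable.indicator (by fun_prop) measurableSet_Ioi

theorem lintegral_expDamp_rlKernel (hα : 0 < α) (hl : 0 < l) :
    ∫⁻ r, expDamp l (rlKernel α) r = ENNReal.ofReal ((1 / l) ^ α) := by
  have Gamma_pos := Real.Gamma_pos_of_pos hα
  have integral_eq : ∫ r in Ioi 0, r ^ (α - 1) * Real.exp (-(l * r)) / Real.Gamma α =
      (1 / l) ^ α := by
    rw [integral_div, Real.integral_rpow_mul_exp_neg_mul_Ioi hα hl,
      mul_div_cancel_right₀ _ Gamma_pos.ne']
  have integrable : IntegrableOn (fun r => r ^ (α - 1) * Real.exp (-(l * r)) / Real.Gamma α)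
      (Ioi 0) := by
    refine not_imp_comm.1 integral_undef ?_
    rw [integral_eq]
    positivity
  rw [← integral_eq, ofReal_integral_eq_lintegral_ofReal integrable]
  · rw [rlKernel, expDamp_indicator, lintegral_indicator measurableSet_Ioi]
    refine lintegral_congr fun r => ?_
    rw [expDamp, ← ENNReal.ofReal_mul (Real.exp_nonneg _)]
    congr 1
    ring
  · filter_upwards [ae_restrict_mem measurableSet_Ioi] with r hr
    rw [mem_Ioi] at hr
    positivity

theorem lintegral_expDamp_rlKernel_ne_top (hα : 0 < α) (hl : 0 < l) :
    ∫⁻ r, expDamp l (rlKernel α) r ≠ ∞ :=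
  (lintegral_expDamp_rlKernel hα hl).trans_ne ENNReal.ofReal_ne_top

theorem tendsto_lintegral_expDamp_rlKernel (hα : 0 < α) :
    Tendsto (fun l => ∫⁻ r, expDamp l (rlKernel α) r) atTop (𝓝 0) := by
  have rpow_tendsto : Tendsto (fun l : ℝ => ENNReal.ofReal (l ^ (-α))) atTop (𝓝 0) := by
    simpa using ENNReal.tendsto_ofReal (tendsto_rpow_neg_atTop hα)
  refine rpow_tendsto.congr' ?_
  filter_upwards [eventually_gt_atTop 0] with l hl
  rw [lintegral_expDamp_rlKernel hα hl, one_div, Real.inv_rpow hl.le, Real.rpow_neg hl.le]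

theorem rlKernel_le_two_mul {z : ℝ} (hα : 0 < α) (hr : 0 < r) (hrz : r / 2 ≤ z) (hzr : z ≤ r) :
    rlKernel α z ≤ 2 * rlKernel α r := by
  have hz : 0 < z := (half_pos hr).trans_le hrz
  have := Real.Gamma_pos_of_pos hα
  rw [rlKernel_of_pos hz, rlKernel_of_pos hr, ← ENNReal.ofReal_ofNat,
    ← ENNReal.ofReal_mul zero_le_two]
  refine ENNReal.ofReal_le_ofReal ?_
  calc z ^ (α - 1) / Real.Gamma α = z ^ α / z / Real.Gamma α := by rw [Real.rpow_sub_one hz.ne']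
    _ ≤ r ^ α / (r / 2) / Real.Gamma α := by gcongr
    _ = 2 * (r ^ (α - 1) / Real.Gamma α) := by rw [Real.rpow_sub_one hr.ne']; field_simp

theorem rlKernel_mul_rlKernel_le {z : ℝ} (hα : 0 < α) (hβ : 0 < β) (hγ : 0 < γ) (hγα : γ ≤ α)
    (hγβ : γ ≤ β) (hzr : z ≤ r) (hrL : r ≤ L) :
    rlKernel β r * rlKernel α z ≤
      ENNReal.ofReal (Real.Gamma γ / Real.Gamma β * L ^ (β - γ)) * rlKernel α r * rlKernel γ z := by
  rcases le_or_gt z 0 with hz | hz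
  · simp [rlKernel_of_nonpos hz]
  have hr : 0 < r := hz.trans_le hzr
  have hL : 0 < L := hr.trans_le hrL
  have := Real.Gamma_pos_of_pos hα
  have := Real.Gamma_pos_of_pos hβ
  have := Real.Gamma_pos_of_pos hγ
  have rpow_le : r ^ (β - 1) * z ^ (α - 1) ≤ L ^ (β - γ) * r ^ (α - 1) * z ^ (γ - 1) :=
    calc r ^ (β - 1) * z ^ (α - 1) = r ^ (β - 1) * (z ^ (α - γ) * z ^ (γ - 1)) := by
          rw [← Real.rpow_add hz]; ring_nf
      _ ≤ r ^ (β - 1) * (r ^ (α - γ) * z ^ (γ - 1)) := by gcongr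
      _ = r ^ (β - γ) * r ^ (α - 1) * z ^ (γ - 1) := by
          rw [← mul_assoc, ← Real.rpow_add hr, ← Real.rpow_add hr]; ring_nf
      _ ≤ L ^ (β - γ) * r ^ (α - 1) * z ^ (γ - 1) := by gcongr
  simp only [rlKernel_of_pos hz, rlKernel_of_pos hr]
  rw [← ENNReal.ofReal_mul (by positivity), ← ENNReal.ofReal_mul (by positivity),
    ← ENNReal.ofReal_mul (by positivity)]
  refine ENNReal.ofReal_le_ofReal ?_
  calc _ = r ^ (β - 1) * z ^ (α - 1) / (Real.Gamma β * Real.Gamma α) := by ring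
    _ ≤ L ^ (β - γ) * r ^ (α - 1) * z ^ (γ - 1) / (Real.Gamma β * Real.Gamma α) := by gcongr
    _ = _ := by field_simp

theorem rlKernel_mul_expDamp_rlKernel_le (hα : 0 < α) (hβ : 0 < β) (hγ : 0 < γ) (hγα : γ ≤ α)
    (hγβ : γ ≤ β) (hl : 0 ≤ l) (hrL : r ≤ L) (τ : ℝ) :
    rlKernel β τ * expDamp l (rlKernel α) (r - τ) ≤
      2 * rlKernel α r * (expDamp l (rlKernel β) τ +
        ENNReal.ofReal (Real.Gamma γ / Real.Gamma β * L ^ (β - γ)) *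
          expDamp l (rlKernel γ) (r - τ)) := by
  set c := ENNReal.ofReal (Real.Gamma γ / Real.Gamma β * L ^ (β - γ))
  rcases le_or_gt τ 0 with hτ | hτ
  · simp [rlKernel_of_nonpos hτ]
  rcases le_or_gt (r - τ) 0 with hσ | hσ
  · simp [expDamp, rlKernel_of_nonpos hσ]
  -- The larger of `τ` and `r - τ` is at least `r / 2`: its kernel is at most twice that at `r`.
  rcases le_total τ (r - τ) with hle | hle
  · calc rlKernel β τ * expDamp l (rlKernel α) (r - τ)
        ≤ rlKernel β τ * (ENNReal.ofReal (Real.exp (-(l * τ))) * (2 * rlKernel α r)) := by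
          unfold expDamp
          gcongr
          exact rlKernel_le_two_mul hα (by linarith) (by linarith) (by linarith)
      _ = 2 * rlKernel α r * expDamp l (rlKernel β) τ := by rw [expDamp]; ring
      _ ≤ _ := by gcongr; exact le_self_add
  · have rlKernel_le : rlKernel β τ ≤ 2 * rlKernel β r :=
      rlKernel_le_two_mul hβ (by linarith) (by linarith) (by linarith)
    have mul_le := rlKernel_mul_rlKernel_le (z := r - τ) hα hβ hγ hγα hγβ (by linarith) hrL
    calc rlKernel β τ * expDamp l (rlKernel α) (r - τ)
        ≤ 2 * rlKernel β r * expDamp l (rlKernel α) (r - τ) := by gcongr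
      _ = 2 * ENNReal.ofReal (Real.exp (-(l * (r - τ)))) *
            (rlKernel β r * rlKernel α (r - τ)) := by rw [expDamp]; ring
      _ ≤ 2 * ENNReal.ofReal (Real.exp (-(l * (r - τ)))) *
            (c * rlKernel α r * rlKernel γ (r - τ)) := by gcongr
      _ = 2 * rlKernel α r * (c * expDamp l (rlKernel γ) (r - τ)) := by rw [expDamp]; ring
      _ ≤ _ := by gcongr; exact le_add_self

theorem lconvolution_expDamp_rlKernel_le (hα : 0 < α) (hβ : 0 < β) (hγ : 0 < γ) (hγα : γ ≤ α)
    (hγβ : γ ≤ β) (hl : 0 ≤ l) (hrL : r ≤ L) :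
    (rlKernel β ⋆ₗ expDamp l (rlKernel α)) r ≤
      2 * ((∫⁻ τ, expDamp l (rlKernel β) τ) +
        ENNReal.ofReal (Real.Gamma γ / Real.Gamma β * L ^ (β - γ)) *
          ∫⁻ τ, expDamp l (rlKernel γ) τ) * rlKernel α r := by
  have β_meas := measurable_expDamp l (measurable_rlKernel β)
  have γ_meas := measurable_expDamp l (measurable_rlKernel γ)
  simp only [lconvolution_def, neg_add_eq_sub]
  refine (lintegral_mono (rlKernel_mul_expDamp_rlKernel_le hα hβ hγ hγα hγβ hl hrL)).trans_eq ?_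
  rw [lintegral_const_mul _ (by fun_prop), lintegral_add_left β_meas,
    lintegral_const_mul _ (by fun_prop), lintegral_sub_left_eq_self (expDamp l (rlKernel γ))]
  ring

theorem eventually_lconvolution_expDamp_rlKernel_le (hα : 0 < α) (hβ : 0 < β) (L : ℝ) {ε : ℝ≥0∞}
    (hε : ε ≠ 0) :
    ∀ᶠ l in atTop, ∀ r ≤ L,
      (rlKernel β ⋆ₗ expDamp l (rlKernel α)) r ≤ ε * rlKernel α r := by
  have hγ : 0 < min α β := lt_min hα hβ
  have coeff_tendsto : Tendsto (fun l => 2 * ((∫⁻ τ, expDamp l (rlKernel β) τ) +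
      ENNReal.ofReal (Real.Gamma (min α β) / Real.Gamma β * L ^ (β - min α β)) *
        ∫⁻ τ, expDamp l (rlKernel (min α β)) τ)) atTop (𝓝 0) := by
    have γ_tendsto := ENNReal.Tendsto.const_mul (tendsto_lintegral_expDamp_rlKernel hγ)
      (.inr (ENNReal.ofReal_ne_top (r := Real.Gamma (min α β) / Real.Gamma β * L ^ (β - min α β))))
    simpa using ENNReal.Tendsto.const_mul ((tendsto_lintegral_expDamp_rlKernel hβ).add γ_tendsto)
      (.inr (ENNReal.ofNat_ne_top (n := 2)))
  filter_upwards [coeff_tendsto.eventually_le_const (pos_iff_ne_zero.2 hε), eventually_ge_atTop 0]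
    with l hle hl r hrL
  exact (lconvolution_expDamp_rlKernel_le hα hβ hγ (min_le_left _ _) (min_le_right _ _) hl
    hrL).trans (mul_le_mul_left hle _)

end Kernel

section Gronwall

variable {ι : Type*} [Fintype ι] {α : ι → ℝ} {l L s T t : ℝ}

theorem exists_forall_lconvolution_expDamp_rlKernel_le (hα : ∀ i, 0 < α i) (C : ℝ≥0) (L : ℝ)
    {ε : ℝ≥0∞} (hε : ε ≠ 0) :
    ∃ l : ℝ, 0 ≤ l ∧ C * ∑ i, ∫⁻ r, expDamp l (rlKernel (α i)) r < 1 ∧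
      ∀ i k, ∀ r ≤ L, (rlKernel (α k) ⋆ₗ expDamp l (rlKernel (α i))) r ≤ ε * rlKernel (α i) r := by
  have mass_tendsto :
      Tendsto (fun l => C * ∑ i, ∫⁻ r, expDamp l (rlKernel (α i)) r) atTop (𝓝 0) := by
    have sum_tendsto := tendsto_finsetSum Finset.univ
      fun i _ => tendsto_lintegral_expDamp_rlKernel (hα i)
    simpa using ENNReal.Tendsto.const_mul sum_tendsto (.inr (ENNReal.coe_ne_top (r := C)))
  have conv_le : ∀ᶠ l in atTop, ∀ i k, ∀ r ≤ L,
      (rlKernel (α k) ⋆ₗ expDamp l (rlKernel (α i))) r ≤ ε * rlKernel (α i) r :=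
    eventually_all.2 fun i => eventually_all.2 fun k =>
      eventually_lconvolution_expDamp_rlKernel_le (hα i) (hα k) L hε
  exact ((eventually_ge_atTop 0).and
    ((mass_tendsto.eventually_lt_const one_pos).and conv_le)).exists

theorem sum_const_mul_rlKernel_lconvolution (c : ℝ≥0∞) (s : ℝ) {κ : ℝ → ℝ≥0∞} (hκ : Measurable κ) :
    ((∑ k, fun τ => c * rlKernel (α k) (τ - s)) ⋆ₗ κ) t =
      c * ∑ k, (rlKernel (α k) ⋆ₗ κ) (t - s) := by
  have rlKernel_meas (k) := measurable_rlKernel (α k)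
  simp only [← lconvolution_comp_sub (rlKernel _), Finset.mul_sum, lconvolution_def,
    Finset.sum_apply, Finset.sum_mul]
  rw [lintegral_finsetSum _ fun k _ => by fun_prop]
  refine Finset.sum_congr rfl fun k _ => ?_
  rw [← lintegral_const_mul _ (by fun_prop)]
  simp only [mul_assoc]

theorem rlKernel_supersolution {C D E ε : ℝ≥0∞} (hε : C * (D + 1) * Fintype.card ι * ε ≤ 1) {i : ι}
    (hconv : ∀ k, ∀ r ≤ L,
      (rlKernel (α k) ⋆ₗ expDamp l (rlKernel (α i))) r ≤ ε * rlKernel (α i) r) (ht : t - s ≤ L) :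
    D * (E * rlKernel (α i) (t - s)) +
        C * ((∑ k, fun τ => (D + 1) * E * rlKernel (α k) (τ - s)) ⋆ₗ
          expDamp l (rlKernel (α i))) t ≤
      (D + 1) * E * rlKernel (α i) (t - s) := by
  rw [sum_const_mul_rlKernel_lconvolution _ _ (measurable_expDamp l (measurable_rlKernel _))]
  calc D * (E * rlKernel (α i) (t - s)) + C * ((D + 1) * E *
        ∑ k, (rlKernel (α k) ⋆ₗ expDamp l (rlKernel (α i))) (t - s))
      ≤ D * (E * rlKernel (α i) (t - s)) +
          C * ((D + 1) * E * ∑ _k : ι, ε * rlKernel (α i) (t - s)) := by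
        gcongr with k
        exact hconv k _ ht
    _ = D * (E * rlKernel (α i) (t - s)) +
          C * (D + 1) * Fintype.card ι * ε * (E * rlKernel (α i) (t - s)) := by
        rw [Finset.sum_const, Finset.card_univ, nsmul_eq_mul]
        ring
    _ ≤ D * (E * rlKernel (α i) (t - s)) + 1 * (E * rlKernel (α i) (t - s)) := by gcongr
    _ = (D + 1) * E * rlKernel (α i) (t - s) := by ring

theorem expDamp_le_add_lconvolution {C D : ℝ≥0∞} {v k w κ : ℝ → ℝ≥0∞} (hl : 0 ≤ l) (hst : s ≤ t)
    (h : v t ≤ D * k (t - s) + C * (w ⋆ₗ κ) t) :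
    expDamp l v t ≤ D * (ENNReal.ofReal (Real.exp (-(l * s))) * k (t - s)) +
      C * (expDamp l w ⋆ₗ expDamp l κ) t := by
  rw [← expDamp_lconvolution]
  calc expDamp l v t
      ≤ expDamp l (fun t => D * k (t - s) + C * (w ⋆ₗ κ) t) t := expDamp_le_expDamp h
    _ = D * expDamp l (fun t => k (t - s)) t + C * expDamp l (w ⋆ₗ κ) t := by
        simp only [expDamp]; ring
    _ ≤ _ := by
        gcongr
        exact expDamp_le_mul hl hst

theorem exists_ae_le_mul_rlKernel_of_le_add_lconvolution (hα : ∀ i, 0 < α i) (C D : ℝ≥0) (L : ℝ) :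
    ∃ K : ℝ≥0, ∀ s T, T - s ≤ L → ∀ u : ι → ℝ → ℝ≥0∞, (∀ i, AEMeasurable (u i)) →
      (∀ i, ∫⁻ t in Ioc s T, u i t ≠ ∞) →
      (∀ i, ∀ᵐ t ∂volume.restrict (Ioc s T), u i t ≤ D * rlKernel (α i) (t - s) +
        C * ((∑ k, (Ioc s T).indicator (u k)) ⋆ₗ rlKernel (α i)) t) →
      ∀ i, ∀ᵐ t ∂volume.restrict (Ioc s T), u i t ≤ K * rlKernel (α i) (t - s) := by
  set ε : ℝ≥0∞ := (C * (D + 1) * Fintype.card ι)⁻¹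
  obtain ⟨l, hl, mass_lt, conv_le⟩ := exists_forall_lconvolution_expDamp_rlKernel_le hα C L
    (ENNReal.inv_ne_zero.2 (by finiteness) : ε ≠ 0)
  refine ⟨(D + 1) * (Real.exp (l * L)).toNNReal, fun s T hTL u hu hufin hule i => ?_⟩
  set E := ENNReal.ofReal (Real.exp (-(l * s)))
  have rlKernel_meas (i) := measurable_rlKernel (α i)
  have comparison := ae_le_of_le_add_lconvolution (C := C) (S := Ioc s T)
    (f := fun i t => D * (E * rlKernel (α i) (t - s))) (U := fun i => expDamp l (u i))
    (V := fun i t => (D + 1) * E * rlKernel (α i) (t - s)) measurableSet_Ioc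
    (fun i => measurable_expDamp l (rlKernel_meas i)) mass_lt
    (fun i => aemeasurable_expDamp l (hu i)) (fun i => by fun_prop)
    (fun i => setLIntegral_Ioc_expDamp_ne_top hl (hufin i)) ?_ ?_ i
  · filter_upwards [comparison, ae_restrict_mem measurableSet_Ioc] with t ht hmem
    calc u i t = ENNReal.ofReal (Real.exp (l * t)) * expDamp l (u i) t := eq_exp_mul_expDamp _ _ _
      _ ≤ ENNReal.ofReal (Real.exp (l * t)) * ((D + 1) * E * rlKernel (α i) (t - s)) := by gcongr
      _ = (D + 1) * ENNReal.ofReal (Real.exp (l * (t - s))) * rlKernel (α i) (t - s) := by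
          rw [show l * (t - s) = l * t + -(l * s) by ring, Real.exp_add,
            ENNReal.ofReal_mul (Real.exp_nonneg _)]
          ring
      _ ≤ (D + 1) * ENNReal.ofReal (Real.exp (l * L)) * rlKernel (α i) (t - s) := by
          gcongr
          linarith [hmem.2]
      _ = _ := by rw [ENNReal.coe_mul]; rfl
  · intro i
    filter_upwards [hule i, ae_restrict_mem measurableSet_Ioc] with t ht hmem
    simp only [← expDamp_indicator, ← expDamp_sum]
    exact expDamp_le_add_lconvolution hl hmem.1.le ht
  · intro i
    filter_upwards [ae_restrict_mem measurableSet_Ioc] with t hmem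
    exact rlKernel_supersolution (ENNReal.mul_inv_le_one _) (conv_le i) (by linarith [hmem.2])

end Gronwall

section LocalIntegrability

variable {α r s t T : ℝ}

theorem enorm_rpow_div_Gamma (hα : 0 < α) (hr : 0 < r) :
    ‖r ^ (α - 1) / Real.Gamma α‖ₑ = rlKernel α r := by
  have := Real.Gamma_pos_of_pos hα
  rw [rlKernel_of_pos hr, Real.enorm_of_nonneg (by positivity)]

theorem abs_le_of_enorm_le_mul_rlKernel (hα : 0 < α) (hr : 0 < r) {K : ℝ≥0} {y : ℝ}
    (hy : ‖y‖ₑ ≤ K * rlKernel α r) : |y| ≤ r ^ (α - 1) * (K / Real.Gamma α) := by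
  have := Real.Gamma_pos_of_pos hα
  rw [rlKernel_of_pos hr, ← ENNReal.ofReal_coe_nnreal, ← ENNReal.ofReal_mul K.coe_nonneg,
    ← ofReal_norm, ENNReal.ofReal_le_ofReal_iff (by positivity), Real.norm_eq_abs] at hy
  exact hy.trans_eq (by ring)

theorem integrableOn_of_intervalIntegrable_rpow_mul {y : ℝ → ℝ} (hTt : T < t)
    (hy : IntervalIntegrable (fun τ => (t - τ) ^ (α - 1) * y τ) volume s t) :
    IntegrableOn y (Ioc s T) := by
  have sub_pos {τ : ℝ} (hτ : τ ≤ T) : 0 < t - τ := by linarith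
  have weight_cont : ContinuousOn (fun τ => (t - τ) ^ (1 - α)) (Icc s T) :=
    ContinuousOn.rpow_const (by fun_prop) fun τ hτ => .inl (sub_pos hτ.2).ne'
  have weighted_int : IntegrableOn (fun τ => (t - τ) ^ (α - 1) * y τ) (Icc s T) := by
    rw [integrableOn_Icc_iff_integrableOn_Ioc]
    exact hy.1.mono_set (Ioc_subset_Ioc_right hTt.le)
  refine ((weighted_int.continuousOn_mul weight_cont isCompact_Icc).congr_fun (fun τ hτ => ?_)
    measurableSet_Icc).mono_set Ioc_subset_Icc_self
  rw [← mul_assoc, ← Real.rpow_add (sub_pos hτ.2), sub_add_sub_cancel, sub_self, Real.rpow_zero,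
    one_mul]

theorem enorm_integral_rpow_mul_le (hα : 0 < α) (hst : s ≤ t) (htT : t ≤ T) (y : ℝ → ℝ) :
    ‖1 / Real.Gamma α * ∫ τ in s..t, (t - τ) ^ (α - 1) * y τ‖ₑ ≤
      ((Ioc s T).indicator (fun τ => ‖y τ‖ₑ) ⋆ₗ rlKernel α) t := by
  rw [← intervalIntegral.integral_const_mul, intervalIntegral.integral_of_le hst,
    integral_Ioc_eq_integral_Ioo]
  refine (enorm_integral_le_lintegral_enorm _).trans ?_
  rw [← lintegral_indicator measurableSet_Ioo]
  refine lintegral_mono fun τ => ?_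
  by_cases hτ : τ ∈ Ioo s t
  · have hτT : τ ∈ Ioc s T := ⟨hτ.1, hτ.2.le.trans htT⟩
    rw [indicator_of_mem hτ, indicator_of_mem hτT, neg_add_eq_sub,
      ← enorm_rpow_div_Gamma hα (sub_pos.2 hτ.2), ← enorm_mul]
    refine (congrArg enorm ?_).le
    ring
  · simp [hτ]

theorem setLIntegral_Ioc_rlKernel_comp_sub_ne_top (hα : 0 < α) :
    ∫⁻ t in Ioc s T, rlKernel α (t - s) ≠ ∞ := by
  refine ne_top_of_le_ne_top
    (ENNReal.mul_ne_top ENNReal.ofReal_ne_top (lintegral_expDamp_rlKernel_ne_top hα one_pos))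
    (b := ENNReal.ofReal (Real.exp (1 * (T - s))) * ∫⁻ r, expDamp 1 (rlKernel α) r) ?_
  rw [← lintegral_sub_right_eq_self (expDamp 1 (rlKernel α)) s,
    ← lintegral_const_mul' _ _ ENNReal.ofReal_ne_top]
  refine (setLIntegral_mono' measurableSet_Ioc fun t ht => ?_).trans
    (setLIntegral_le_lintegral (Ioc s T) _)
  rw [eq_exp_mul_expDamp 1 (rlKernel α) (t - s)]
  gcongr
  exact ht.2

theorem setLIntegral_Ioc_lconvolution_rlKernel_ne_top (hα : 0 < α) {f : ℝ → ℝ≥0∞}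
    (hf : AEMeasurable f (volume.restrict (Ioc s T))) (hfin : ∫⁻ t in Ioc s T, f t ≠ ∞) :
    ∫⁻ t in Ioc s T, ((Ioc s T).indicator f ⋆ₗ rlKernel α) t ≠ ∞ := by
  refine setLIntegral_Ioc_ne_top_of_expDamp zero_le_one
    (ne_top_of_le_ne_top ?_ (setLIntegral_le_lintegral _ _))
  have indicator_meas := (aemeasurable_indicator_iff measurableSet_Ioc).2 hf
  rw [expDamp_lconvolution, lintegral_lconvolution (aemeasurable_expDamp 1 indicator_meas)
    (measurable_expDamp 1 (measurable_rlKernel α)).aemeasurable, expDamp_indicator,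
    lintegral_indicator measurableSet_Ioc]
  exact ENNReal.mul_ne_top (setLIntegral_Ioc_expDamp_ne_top zero_le_one hfin)
    (lintegral_expDamp_rlKernel_ne_top hα one_pos)

theorem ae_imp_of_forall_mem_ae_le {I : Set ℝ} (hI : I.OrdConnected) {μ : Measure ℝ}
    {p : ℝ → Prop} (h : ∀ b ∈ I, ∀ᵐ t ∂μ, t ≤ b → p t) : ∀ᵐ t ∂μ, t ∈ I → p t := by
  rcases I.eq_empty_or_nonempty with rfl | ⟨a, ha⟩
  · simp
  have : Nonempty I := ⟨⟨a, ha⟩⟩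
  obtain ⟨b, hb⟩ := exists_seq_tendsto (atTop : Filter I)
  filter_upwards [ae_all_iff.2 fun n => h (b n) (b n).2] with t ht htI
  obtain ⟨n, hn⟩ := (hb.eventually_ge_atTop ⟨t, htI⟩).exists
  exact ht n hn

end LocalIntegrability

section FractionalSystem

variable {ι : Type*} [Fintype ι] {α : ι → ℝ} {A : ℝ → Matrix ι ι ℝ} {c : ι → ℝ} {s b T : ℝ}
  {x : ℝ → ι → ℝ}

/-- `x` solves almost everywhere on `(s, b]` the linear Volterra system with Riemann–Liouville
kernels of orders `α i`, coefficient matrix `A` and initial weights `c`; the integrals are required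
to exist. A column of the state-transition matrix `Z(·, s)` is such a solution. -/
structure IsFractionalSolution (α : ι → ℝ) (A : ℝ → Matrix ι ι ℝ) (c : ι → ℝ) (s b : ℝ)
    (x : ℝ → ι → ℝ) : Prop where
  measurable : ∀ i, Measurable fun t => x t i
  intervalIntegrable : ∀ i, ∀ᵐ t ∂volume.restrict (Ioc s b),
    IntervalIntegrable (fun τ => (t - τ) ^ (α i - 1) * ∑ k, A τ i k * x τ k) volume s t
  eq_add_integral : ∀ i, ∀ᵐ t ∂volume.restrict (Ioc s b),
    x t i = (t - s) ^ (α i - 1) / Real.Gamma (α i) * c i +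
      1 / Real.Gamma (α i) * ∫ τ in s..t, (t - τ) ^ (α i - 1) * ∑ k, A τ i k * x τ k

namespace IsFractionalSolution

theorem integrableOn_sum (hx : IsFractionalSolution α A c s b x) (hTb : T < b) (i : ι) :
    IntegrableOn (fun τ => ∑ k, A τ i k * x τ k) (Ioc s T) := by
  rcases le_or_gt T s with hTs | hsT
  · simp [Ioc_eq_empty hTs.not_gt]
  have ae_Ioc := ae_restrict_of_ae_restrict_of_subset (Ioc_subset_Ioc_left hsT.le)
    (hx.intervalIntegrable i)
  have : (ae (volume.restrict (Ioc T b))).NeBot := ae_restrict_neBot.2 (by simp [hTb])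
  obtain ⟨t, ht, hmem⟩ := (ae_Ioc.and (ae_restrict_mem measurableSet_Ioc)).exists
  exact integrableOn_of_intervalIntegrable_rpow_mul hmem.1 ht

theorem enorm_le (hx : IsFractionalSolution α A c s b x) (hα : ∀ i, 0 < α i) (hTb : T ≤ b) (i : ι) :
    ∀ᵐ t ∂volume.restrict (Ioc s T), ‖x t i‖ₑ ≤ ‖c i‖ₑ * rlKernel (α i) (t - s) +
      ((Ioc s T).indicator (fun τ => ‖∑ k, A τ i k * x τ k‖ₑ) ⋆ₗ rlKernel (α i)) t := by
  filter_upwards [ae_restrict_of_ae_restrict_of_subset (Ioc_subset_Ioc_right hTb)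
    (hx.eq_add_integral i), ae_restrict_mem measurableSet_Ioc] with t ht hmem
  rw [ht]
  refine (enorm_add_le _ _).trans (add_le_add ?_ ?_)
  · rw [enorm_mul, enorm_rpow_div_Gamma (hα i) (sub_pos.2 hmem.1), mul_comm]
  · exact enorm_integral_rpow_mul_le (hα i) hmem.1.le hmem.2 _

theorem setLIntegral_enorm_ne_top (hx : IsFractionalSolution α A c s b x) (hα : ∀ i, 0 < α i)
    (hTb : T < b) (i : ι) : ∫⁻ t in Ioc s T, ‖x t i‖ₑ ≠ ∞ := by
  have sum_int := hx.integrableOn_sum hTb i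
  refine ne_top_of_le_ne_top ?_ (lintegral_mono_ae (hx.enorm_le hα hTb.le i))
  have := measurable_rlKernel (α i)
  rw [lintegral_add_left (by fun_prop), lintegral_const_mul _ (by fun_prop)]
  exact ENNReal.add_ne_top.2
    ⟨ENNReal.mul_ne_top enorm_ne_top (setLIntegral_Ioc_rlKernel_comp_sub_ne_top (hα i)),
      setLIntegral_Ioc_lconvolution_rlKernel_ne_top (hα i) sum_int.aestronglyMeasurable.enorm
        sum_int.2.ne⟩

theorem enorm_le_mul_add_lconvolution (hx : IsFractionalSolution α A c s b x) (hα : ∀ i, 0 < α i)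
    {M D : ℝ≥0} (hc : ∀ i, ‖c i‖ₑ ≤ D)
    (hA : ∀ᵐ t ∂volume.restrict (Ioc s b), ∀ i k, ‖A t i k‖ₑ ≤ M) (hTb : T ≤ b) (i : ι) :
    ∀ᵐ t ∂volume.restrict (Ioc s T), ‖x t i‖ₑ ≤ D * rlKernel (α i) (t - s) +
      M * ((∑ k, (Ioc s T).indicator fun τ => ‖x τ k‖ₑ) ⋆ₗ rlKernel (α i)) t := by
  have indicator_le : ∀ᵐ τ, (Ioc s T).indicator (fun τ => ‖∑ k, A τ i k * x τ k‖ₑ) τ ≤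
      M * (∑ k, (Ioc s T).indicator fun τ => ‖x τ k‖ₑ) τ := by
    filter_upwards [(ae_restrict_iff' measurableSet_Ioc).1 hA] with τ hτ
    by_cases hmem : τ ∈ Ioc s T
    swap
    · simp [hmem]
    simp only [Finset.sum_apply, indicator_of_mem hmem, Finset.mul_sum]
    refine (enorm_sum_le _ _).trans (Finset.sum_le_sum fun k _ => ?_)
    rw [enorm_mul]
    gcongr
    exact hτ (Ioc_subset_Ioc_right hTb hmem) i k
  filter_upwards [hx.enorm_le hα hTb i] with t ht
  refine ht.trans (add_le_add (by gcongr; exact hc i) ?_)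
  exact lconvolution_le_mul_lconvolution_of_ae_le ENNReal.coe_ne_top indicator_le _ t

theorem exists_enorm_le_mul_rlKernel (hα : ∀ i, 0 < α i) (M D : ℝ≥0) (L : ℝ) :
    ∃ K : ℝ≥0, ∀ A c s b x, IsFractionalSolution α A c s b x → b - s ≤ L → (∀ i, ‖c i‖ₑ ≤ D) →
      (∀ᵐ t ∂volume.restrict (Ioc s b), ∀ i k, ‖A t i k‖ₑ ≤ M) →
      ∀ i, ∀ᵐ t ∂volume.restrict (Ioc s b), ‖x t i‖ₑ ≤ K * rlKernel (α i) (t - s) := by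
  obtain ⟨K, hK⟩ := exists_ae_le_mul_rlKernel_of_le_add_lconvolution hα M D L
  refine ⟨K, fun A c s b x hx hbL hc hA i => ?_⟩
  have ae_Ioc (T) (hT : T < b) :
      ∀ᵐ t ∂volume.restrict (Ioc s T), ‖x t i‖ₑ ≤ K * rlKernel (α i) (t - s) :=
    hK s T (by linarith) _ (fun k => (hx.measurable k).enorm.aemeasurable)
      (fun k => hx.setLIntegral_enorm_ne_top hα hT k)
      (fun k => hx.enorm_le_mul_add_lconvolution hα hc hA hT.le k) i
  rw [← restrict_Ioo_eq_restrict_Ioc]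
  have of_lt := ae_imp_of_forall_mem_ae_le ordConnected_Iio (I := Iio b)
    (μ := volume.restrict (Ioo s b)) (p := fun t => ‖x t i‖ₑ ≤ K * rlKernel (α i) (t - s))
    fun T hT => by
      filter_upwards [ae_restrict_of_ae ((ae_restrict_iff' measurableSet_Ioc).1 (ae_Ioc T hT)),
        ae_restrict_mem measurableSet_Ioo] with t ht hmem htT using ht ⟨hmem.1, htT⟩
  filter_upwards [of_lt, ae_restrict_mem measurableSet_Ioo] with t ht hmem using ht hmem.2

end IsFractionalSolution

end FractionalSystem

section StateTransition

theorem ae_integrableOn_Icc_of_abs_le_rpow {μ : Measure ℝ} [SFinite μ] {z : ℝ → ℝ → ℝ}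
    {a b α Θ : ℝ} (hz : Measurable fun p : ℝ × ℝ => z p.1 p.2) (hα : 0 < α)
    (hle : ∀ s ∈ Ico a b, ∀ᵐ t ∂μ, s < t → t ≤ b → |z t s| ≤ (t - s) ^ (α - 1) * Θ) :
    ∀ᵐ t ∂μ, t ≤ b → a < t → IntegrableOn (z t) (Icc a t) := by
  have z_swap_meas : Measurable fun p : ℝ × ℝ => z p.2 p.1 := hz.comp measurable_swap
  have bound_meas : MeasurableSet
      {p : ℝ × ℝ | p.1 < p.2 → p.2 ≤ b → |z p.2 p.1| ≤ (p.2 - p.1) ^ (α - 1) * Θ} := by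
    refine (measurableSet_lt measurable_fst measurable_snd).imp <|
      (measurableSet_le measurable_snd measurable_const).imp <| measurableSet_le ?_ (by fun_prop)
    simpa only [Real.norm_eq_abs] using z_swap_meas.norm
  have bound_ae := (Measure.ae_ae_comm bound_meas).1 <|
    (ae_restrict_mem (μ := volume) measurableSet_Ico).mono hle
  filter_upwards [bound_ae] with t ht htb hat
  have rpow_int : IntegrableOn (fun s => (t - s) ^ (α - 1) * Θ) (Ioo a t) := by
    have rpow_zero_int : IntervalIntegrable (fun r : ℝ => r ^ (α - 1)) volume (t - t) (t - a) :=
      intervalIntegral.intervalIntegrable_rpow' (by linarith)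
    have rpow_sub_int := (rpow_zero_int.comp_sub_left t).symm
    simp only [sub_sub_cancel] at rpow_sub_int
    exact ((intervalIntegrable_iff_integrableOn_Ioo_of_le hat.le).1 rpow_sub_int).mul_const Θ
  rw [integrableOn_Icc_iff_integrableOn_Ioo]
  refine rpow_int.mono' (hz.comp (measurable_const.prodMk measurable_id)).aestronglyMeasurable ?_
  have Ioo_subset : Ioo a t ⊆ Ico a b := fun s hs => ⟨hs.1.le, hs.2.trans_le htb⟩
  filter_upwards [ae_restrict_of_ae_restrict_of_subset Ioo_subset ht,
    ae_restrict_mem measurableSet_Ioo] with s hs hmem using hs hmem.2 htb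

variable {ι : Type*} [Fintype ι]

theorem IsFractionalSolution.exists_abs_le {α : ι → ℝ} (hα : ∀ i, 0 < α i) (M L : ℝ) (D : ℝ≥0) :
    ∃ Θ : ℝ, ∀ A c s b x, IsFractionalSolution α A c s b x → b - s ≤ L → (∀ i, ‖c i‖ₑ ≤ D) →
      (∀ᵐ t ∂volume.restrict (Ioc s b), ∀ i k, |A t i k| ≤ M) →
      ∀ᵐ t ∂volume.restrict (Ioc s b), ∀ i, |x t i| ≤ (t - s) ^ (α i - 1) * Θ := by
  obtain ⟨K, hK⟩ := IsFractionalSolution.exists_enorm_le_mul_rlKernel hα M.toNNReal D L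
  obtain ⟨Θ, hΘ⟩ := Finite.exists_le fun i => (K : ℝ) / Real.Gamma (α i)
  refine ⟨Θ, fun A c s b x hx hbL hc hA => ae_all_iff.2 fun i => ?_⟩
  have enorm_A_le : ∀ᵐ t ∂volume.restrict (Ioc s b), ∀ i k, ‖A t i k‖ₑ ≤ M.toNNReal :=
    hA.mono fun t ht i k => by
      rw [← ofReal_norm]
      exact ENNReal.ofReal_le_ofReal (ht i k)
  filter_upwards [hK A c s b x hx hbL hc enorm_A_le i, ae_restrict_mem measurableSet_Ioc]
    with t ht hmem
  have sub_pos : 0 < t - s := sub_pos.2 hmem.1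
  refine (abs_le_of_enorm_le_mul_rlKernel (hα i) sub_pos ht).trans ?_
  gcongr
  exact hΘ i

variable [DecidableEq ι] {a b s : ℝ} {I : Set ℝ} {α : ι → ι → ℝ} {A : ℝ → Matrix ι ι ℝ}
  {Z : ℝ → ℝ → Matrix ι ι ℝ}

/-- `Z` is a state-transition matrix on `I` of the linear system of fractional orders `α` and
coefficient matrix `A`. Since `∫` is `0` on non-integrable functions, existence of the integrals in
the equation is required separately. -/
structure IsStateTransition (α : ι → ι → ℝ) (A : ℝ → Matrix ι ι ℝ) (I : Set ℝ)
    (Z : ℝ → ℝ → Matrix ι ι ℝ) : Prop where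
  measurable : ∀ i j, Measurable fun p : ℝ × ℝ => Z p.1 p.2 i j
  eq_add_integral : ∀ s ∈ I, ∀ᵐ t ∂volume.restrict I, s < t → ∀ i j,
    Z t s i j = (t - s) ^ (α i j - 1) / Real.Gamma (α i j) * (if i = j then (1 : ℝ) else 0) +
      (1 / Real.Gamma (α i j)) * ∫ τ in s..t, (t - τ) ^ (α i j - 1) * ∑ k, A τ i k * Z τ s k j
  intervalIntegrable : ∀ s ∈ I, ∀ᵐ t ∂volume.restrict I, s < t → ∀ i j,
    IntervalIntegrable (fun τ => (t - τ) ^ (α i j - 1) * ∑ k, A τ i k * Z τ s k j) volume s t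

namespace IsStateTransition

theorem isFractionalSolution_column (hZ : IsStateTransition α A I Z) (hs : s ∈ I)
    (hsub : Ioc s b ⊆ I) (j : ι) :
    IsFractionalSolution (fun i => α i j) A (fun i => if i = j then 1 else 0) s b
      fun t i => Z t s i j where
  measurable i := (hZ.measurable i j).comp measurable_prodMk_right
  intervalIntegrable i := by
    filter_upwards [ae_restrict_of_ae_restrict_of_subset hsub (hZ.intervalIntegrable s hs),
      ae_restrict_mem measurableSet_Ioc] with t ht hmem using ht hmem.1 i j
  eq_add_integral i := by
    filter_upwards [ae_restrict_of_ae_restrict_of_subset hsub (hZ.eq_add_integral s hs),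
      ae_restrict_mem measurableSet_Ioc] with t ht hmem using ht hmem.1 i j

theorem exists_abs_le (hZ : IsStateTransition α A I Z) (hα : ∀ i j, 0 < α i j)
    (hsub : Icc a b ⊆ I)
    (hA : ∃ M : ℝ, ∀ᵐ t ∂volume.restrict (Icc a b), ∀ i j, |A t i j| ≤ M) :
    ∃ Θ : ℝ, 0 ≤ Θ ∧ ∀ s ∈ Ico a b, ∀ᵐ t ∂volume.restrict I, s < t → t ≤ b → ∀ i j,
      |Z t s i j| ≤ (t - s) ^ (α i j - 1) * Θ := by
  obtain ⟨M, hM⟩ := hA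
  choose Θ hΘ using fun j =>
    IsFractionalSolution.exists_abs_le (fun i => hα i j) M (b - a) 1
  obtain ⟨Θ', hΘ'⟩ := Finite.exists_le Θ
  refine ⟨max Θ' 0, le_max_right _ _, fun s hs => ?_⟩
  have Ioc_subset : Ioc s b ⊆ Icc a b := fun t ht => ⟨hs.1.trans ht.1.le, ht.2⟩
  have column_le (j : ι) :
      ∀ᵐ t ∂volume.restrict (Ioc s b), ∀ i, |Z t s i j| ≤ (t - s) ^ (α i j - 1) * Θ j :=
    hΘ j _ _ s b _ (hZ.isFractionalSolution_column (hsub ⟨hs.1, hs.2.le⟩) (Ioc_subset.trans hsub) j)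
      (by linarith [hs.1]) (fun i => by split_ifs <;> simp)
      (ae_restrict_of_ae_restrict_of_subset Ioc_subset hM)
  refine ae_restrict_of_ae ?_
  filter_upwards [(ae_restrict_iff' measurableSet_Ioc).1 (ae_all_iff.2 column_le)]
    with t ht hst htb i j
  have := sub_pos.2 hst
  refine (ht ⟨hst, htb⟩ j i).trans ?_
  gcongr
  exact (hΘ' j).trans (le_max_left _ _)

end IsStateTransition

theorem statement10_general (hI : I.OrdConnected) (ha : a ∈ I) (hα : ∀ i j, 0 < α i j)
    (hA : ∀ b ∈ I, ∃ M : ℝ, ∀ᵐ t ∂volume.restrict (Icc a b), ∀ i j, |A t i j| ≤ M)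
    (hZ : IsStateTransition α A I Z) :
    (∀ b ∈ I, ∃ Θ : ℝ, 0 ≤ Θ ∧
      ∀ s ∈ Ico a b, ∀ᵐ t ∂volume.restrict I, s < t → t ≤ b → ∀ i j,
        |Z t s i j| ≤ (t - s) ^ (α i j - 1) * Θ) ∧
    ∀ᵐ t ∂volume.restrict I, a < t → ∀ i j,
      IntegrableOn (fun s => Z t s i j) (Icc a t) := by
  have bound (b) (hb : b ∈ I) := hZ.exists_abs_le hα (hI.out ha hb) (hA b hb)
  refine ⟨bound, ?_⟩
  have integrable_of_mem := ae_imp_of_forall_mem_ae_le hI (μ := volume.restrict I)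
    (p := fun t => a < t → ∀ i j, IntegrableOn (fun s => Z t s i j) (Icc a t)) fun b hb => by
      obtain ⟨Θ, -, hΘ⟩ := bound b hb
      have entry (i j) := ae_integrableOn_Icc_of_abs_le_rpow (hZ.measurable i j) (hα i j)
        fun s hs => (hΘ s hs).mono fun t ht hst htb => ht hst htb i j
      filter_upwards [ae_all_iff.2 fun i => ae_all_iff.2 (entry i)] with t ht htb hat i j
        using ht i j htb hat
  filter_upwards [integrable_of_mem, ae_restrict_mem hI.measurableSet] with t ht htI using ht htI

end StateTransition

theorem statement10 (a : ℝ) (I : Set ℝ)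
    (haI : a ∈ I) (hIsub : I ⊆ Set.Ici a) (hIint : (interior I).Nonempty)
    (hIord : I.OrdConnected)
    (m : ℕ) (hm : 0 < m)
    (α : Fin m → Fin m → ℝ) (hα : ∀ i j, 0 < α i j ∧ α i j ≤ 1)
    (A : ℝ → Matrix (Fin m) (Fin m) ℝ)
    -- `A` is measurable and locally essentially bounded on `I`
    (hAmeas : ∀ i j, Measurable fun t => A t i j)
    (hAbdd : ∀ b ∈ I, ∃ M : ℝ,
      ∀ᵐ t ∂(volume.restrict (Set.Icc a b)), ∀ i j, |A t i j| ≤ M)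
    (Z : ℝ → ℝ → Matrix (Fin m) (Fin m) ℝ)
    (hZmeas : ∀ i j, Measurable fun p : ℝ × ℝ => Z p.1 p.2 i j)
    -- `Z` satisfies the left state-transition integral equation
    (hZeq : ∀ s ∈ I, ∀ᵐ t ∂(volume.restrict I), s < t → ∀ i j,
      Z t s i j = (t - s) ^ (α i j - 1) / Real.Gamma (α i j) * (if i = j then (1:ℝ) else 0)
        + (1 / Real.Gamma (α i j)) *
            ∫ τ in s..t, (t - τ) ^ (α i j - 1) * ∑ k, A τ i k * Z τ s k j)
    (hZint : ∀ s ∈ I, ∀ᵐ t ∂(volume.restrict I), s < t → ∀ i j,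
      IntervalIntegrable (fun τ => (t - τ) ^ (α i j - 1) * ∑ k, A τ i k * Z τ s k j)
        volume s t) :
    (∀ b ∈ I, a < b → ∃ Θ : ℝ, 0 ≤ Θ ∧
      ∀ s ∈ Set.Ico a b, ∀ᵐ t ∂(volume.restrict I), s < t → t ≤ b → ∀ i j,
        |Z t s i j| ≤ (t - s) ^ (α i j - 1) * Θ) ∧
    ∀ᵐ t ∂(volume.restrict I), a < t → ∀ i j,
      MeasureTheory.IntegrableOn (fun s => Z t s i j) (Set.Icc a t) := by
  have general := statement10_general hIord haI (fun i j => (hα i j).1) hAbdd ⟨hZmeas, hZeq, hZint⟩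
  exact ⟨fun b hb _ => general.1 b hb, general.2⟩
end
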